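/- arXiv:1106.6343 — 2 statements merged into one kernel-verified Lean document; each statement's English description precedes it below -/
import Mathlib

section
/- Let α = (a_{νμ}) ∈ K^I be such that C_α is a nodal curve with at least one node, and let m_α = ({A_{νμ} − a_{νμ}}) be the corresponding maximal ideal of R. Then the localization of R/(Δ) at m_α is a regular local ring if and only if C_α has exactly one node. -/
open MvPolynomial

set_option synthInstance.maxHeartbeats 1000000
set_option maxHeartbeats 1000000

def idxSet (p q : ℕ) : Finset (ℕ × ℕ) :=
  (Finset.range q ×ˢ Finset.range p).filter fun t => t.1 * p + t.2 * q < p * q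

/-- `R = K[{A_νμ}]`, the polynomial ring in the indeterminates `A_νμ`, `(ν,μ) ∈ I`. -/
abbrev coefRing (K : Type) [Field K] (p q : ℕ) := MvPolynomial ↥(idxSet p q) K

/-- `R[X,Y]`, with `X 0 = X` and `X 1 = Y`. -/
abbrev genRing (K : Type) [Field K] (p q : ℕ) := MvPolynomial (Fin 2) (coefRing K p q)

/-- The generic normed Weierstraß polynomial
`F = Y^p − X^q + Σ_{(ν,μ) ∈ I} A_νμ X^ν Y^μ ∈ R[X,Y]` of type `p,q`. -/
noncomputable def genF (K : Type) [Field K] (p q : ℕ) : genRing K p q :=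
  X 1 ^ p - X 0 ^ q +
    ∑ i : idxSet p q, C (MvPolynomial.X i) * X 0 ^ (i : ℕ × ℕ).1 * X 1 ^ (i : ℕ × ℕ).2

/-- The determinant `Δ ∈ R` of the `R`-linear endomorphism of `N = R[X,Y]/(F_X, F_Y)`
given by multiplication by the residue class of `F`. -/
noncomputable def genDelta (K : Type) [Field K] (p q : ℕ) : coefRing K p q :=
  LinearMap.det
    (LinearMap.mul (coefRing K p q)
      (genRing K p q ⧸ Ideal.span {pderiv 0 (genF K p q), pderiv 1 (genF K p q)})
      (Ideal.Quotient.mk (Ideal.span {pderiv 0 (genF K p q), pderiv 1 (genF K p q)})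
        (genF K p q)))

/-- The normed Weierstraß polynomial `F_a = Y^p − X^q + Σ a_νμ X^ν Y^μ ∈ K[X,Y]`. -/
noncomputable def wPoly (K : Type) [CommRing K] (p q : ℕ) (a : idxSet p q → K) :
    MvPolynomial (Fin 2) K :=
  X 1 ^ p - X 0 ^ q + ∑ i : idxSet p q, C (a i) * X 0 ^ (i : ℕ × ℕ).1 * X 1 ^ (i : ℕ × ℕ).2

/-- `P` is a singular point of the curve `G = 0`. -/
def IsSingAt (K : Type) [CommRing K] (G : MvPolynomial (Fin 2) K) (P : K × K) : Prop :=
  eval ![P.1, P.2] G = 0 ∧ eval ![P.1, P.2] (pderiv 0 G) = 0 ∧ eval ![P.1, P.2] (pderiv 1 G) = 0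


/-- The Hessian determinant `G_{XX} G_{YY} − G_{XY}²` of a polynomial in `X, Y`. -/
noncomputable def hessPoly (K : Type) [CommRing K] (G : MvPolynomial (Fin 2) K) :
    MvPolynomial (Fin 2) K :=
  pderiv 0 (pderiv 0 G) * pderiv 1 (pderiv 1 G) - (pderiv 0 (pderiv 1 G)) ^ 2

/-- `P` is a node of the curve `G = 0`. -/
def IsNodeAt (K : Type) [CommRing K] (G : MvPolynomial (Fin 2) K) (P : K × K) : Prop :=
  IsSingAt K G P ∧ eval ![P.1, P.2] (hessPoly K G) ≠ 0

/-- A commutative ring is a regular local ring iff it is a Noetherian local ring whose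
maximal ideal can be generated by (Krull dimension)-many elements. -/
def IsRegularLocal (S : Type) [CommRing S] : Prop :=
  IsNoetherianRing S ∧
    ∃ h : IsLocalRing S, ∃ s : Finset S,
      Ideal.span (s : Set S) = @IsLocalRing.maximalIdeal S _ h ∧
        (s.card : WithBot (WithTop ℕ)) = ringKrullDim S

/-- The maximal ideal `m_a = ({A_νμ − a_νμ})` of `R`, i.e. the kernel of evaluation at `a`. -/
noncomputable def ptMaxIdeal (K : Type) [Field K] (p q : ℕ) (a : idxSet p q → K) :
    Ideal (coefRing K p q) :=
  RingHom.ker (eval a : coefRing K p q →+* K)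

/-- The image of `m_a` in `R/(Δ)`. -/
noncomputable def ptMaxIdealBar (K : Type) [Field K] (p q : ℕ) (a : idxSet p q → K) :
    Ideal (coefRing K p q ⧸ Ideal.span {genDelta K p q}) :=
  Ideal.map (Ideal.Quotient.mk (Ideal.span {genDelta K p q})) (ptMaxIdeal K p q a)

/-! The localization of `R/(Δ)` at `m_a` is regular iff `Δ ∉ m_a ^ 2`, so the order of vanishing of
`Δ` at `a` has to be compared with the singular points of `C_a`. Write `f` for the class of `F_a`
in the Jacobian algebra `N_a = K[X, Y] / (F_X, F_Y)`, and `τ` for the dimension of `N_a / (f)`.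

Modulo `m_a`, the matrix whose determinant is `Δ` becomes that of multiplication by `f`, which has
corank `τ`; hence `Δ ∈ m_a ^ τ`. Evaluation embeds the singular points of `C_a` into the `K`-algebra
homomorphisms from `N_a / (f)` to `K`, so their number is at most `τ`, and two singular points force
`Δ ∈ m_a ^ 2`.

If a node is the only singular point then, by the Nullstellensatz and because the Hessian is
invertible, `(f)` is the maximal ideal of the node in `N_a` and is idempotent; in particular
`τ = 1`. Restricted to the line through `a` along which only the constant coefficient varies, `Δ`
becomes the characteristic polynomial of multiplication by `-f`. By idempotency its root `0` has
multiplicity `τ = 1`, so `Δ ∉ m_a ^ 2`. -/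

section TriangularFamilies

variable {ι α S M N : Type*} [CommRing S] [AddCommGroup M] [Module S M] [AddCommGroup N]
  [Module S N] [LinearOrder α] {w : ι → α} {v : ι → M}

lemma eq_top_of_basis_mem_of_lt [WellFoundedLT α] (b : Module.Basis ι S M) {P : Submodule S M}
    (h : ∀ i, Submodule.span S (b '' {j | w j < w i}) ≤ P → b i ∈ P) : P = ⊤ := by
  have hb : ∀ i, b i ∈ P := by
    intro i
    induction hk : w i using WellFoundedLT.induction generalizing i with
    | _ k ih =>
      refine h i ?_
      rw [Submodule.span_le, Set.image_subset_iff]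
      exact fun j hj => ih _ (hk ▸ hj) j rfl
  rw [eq_top_iff, ← b.span_eq, Submodule.span_le]
  exact Set.range_subset_iff.mpr hb

lemma span_range_eq_top_of_triangular [WellFoundedLT α] (b : Module.Basis ι S M)
    (hv : ∀ i, ∃ c : Sˣ, v i - c • b i ∈ Submodule.span S (b '' {j | w j < w i})) :
    Submodule.span S (Set.range v) = ⊤ := by
  refine eq_top_of_basis_mem_of_lt b (w := w) fun i hlow => ?_
  obtain ⟨c, hc⟩ := hv i
  have hcb : c • b i ∈ Submodule.span S (Set.range v) :=
    (Submodule.sub_mem_iff_right _ (Submodule.subset_span (Set.mem_range_self i))).mp (hlow hc)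
  exact (Submodule.smul_mem_iff_of_isUnit _ c.isUnit).mp hcb

lemma linearIndependent_of_triangular (b : Module.Basis ι S M)
    (hv : ∀ i, ∃ c : Sˣ, v i - c • b i ∈ Submodule.span S (b '' {j | w j < w i})) :
    LinearIndependent S v := by
  classical
  choose c hv using hv
  rw [linearIndependent_iff]
  intro l hl
  by_contra hne
  obtain ⟨m, hm, hmax⟩ := Finset.exists_max_image l.support w (Finsupp.support_nonempty_iff.mpr hne)
  have hcoord : ∀ i ∈ l.support, b.repr (v i) m = if i = m then (c i : S) else 0 := by
    intro i hi
    have hzero : b.repr (v i - c i • b i) m = 0 := Finsupp.notMem_support_iff.mp fun h =>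
      (hmax i hi).not_gt (b.repr_support_subset_of_mem_span _ (hv i) h)
    simpa [sub_eq_zero, Units.smul_def, Finsupp.single_apply] using hzero
  have hsum : l m * c m = 0 := by
    have := congrArg (fun x => b.repr x m) hl
    simp only [Finsupp.linearCombination_apply, Finsupp.sum, map_sum, map_smul,
      Finsupp.coe_finsetSum, Finset.sum_apply, Finsupp.smul_apply, map_zero,
      Finsupp.zero_apply] at this
    rwa [Finset.sum_congr rfl fun i hi => by rw [hcoord i hi], Finset.sum_eq_single_of_mem m hm
      fun i _ hi => by rw [if_neg hi, smul_zero], if_pos rfl, smul_eq_mul] at this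
  exact Finsupp.mem_support_iff.mp hm ((c m).mul_left_eq_zero.mp hsum)

/-- A family that is triangular with unit diagonal entries with respect to a weighted basis,
as a basis. -/
noncomputable def basisOfTriangular [WellFoundedLT α] (b : Module.Basis ι S M)
    (hv : ∀ i, ∃ c : Sˣ, v i - c • b i ∈ Submodule.span S (b '' {j | w j < w i})) :
    Module.Basis ι S M :=
  .mk (linearIndependent_of_triangular b hv) (span_range_eq_top_of_triangular b hv).ge

lemma basisOfTriangular_apply [WellFoundedLT α] (b : Module.Basis ι S M)
    (hv : ∀ i, ∃ c : Sˣ, v i - c • b i ∈ Submodule.span S (b '' {j | w j < w i})) (i : ι) :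
    basisOfTriangular b hv i = v i :=
  Module.Basis.mk_apply _ _ i

/-- The image, under a surjection killing exactly the span of the basis vectors outside `s`, of the
basis vectors in `s`, as a basis. -/
noncomputable def basisOfKerEqSpanCompl (b : Module.Basis ι S M) {π : M →ₗ[S] N}
    (hπ : Function.Surjective π) {s : Set ι}
    (hker : LinearMap.ker π = Submodule.span S (b '' sᶜ)) : Module.Basis s S N :=
  .mk (v := fun i : s => π (b i))
    ((b.linearIndependent.comp _ Subtype.val_injective).map <| by
      rw [hker, Set.range_comp, Subtype.range_coe]
      exact b.linearIndependent.disjoint_span_image disjoint_compl_right) <| by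
    rw [← LinearMap.range_eq_top.mpr hπ, LinearMap.range_eq_map, ← b.span_eq, Submodule.map_span,
      Submodule.span_le]
    rintro _ ⟨_, ⟨i, rfl⟩, rfl⟩
    by_cases hi : i ∈ s
    · exact Submodule.subset_span ⟨⟨i, hi⟩, rfl⟩
    · have : b i ∈ LinearMap.ker π := hker ▸ Submodule.subset_span ⟨i, hi, rfl⟩
      rw [LinearMap.mem_ker.mp this]
      exact zero_mem _

lemma basisOfKerEqSpanCompl_apply (b : Module.Basis ι S M) {π : M →ₗ[S] N}
    (hπ : Function.Surjective π) {s : Set ι}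
    (hker : LinearMap.ker π = Submodule.span S (b '' sᶜ)) (i : s) :
    basisOfKerEqSpanCompl b hπ hker i = π (b i) :=
  Module.Basis.mk_apply _ _ i

end TriangularFamilies

section CoprimeLeadingMonomials

variable {σ : Type*} {S : Type*} [CommRing S]

/-- The polynomials of weighted degree less than `n`, where `X i` has weight `w i`. -/
noncomputable def weightLT (S : Type*) [CommRing S] (w : σ → ℕ) (n : ℕ) :
    Submodule S (MvPolynomial σ S) :=
  restrictSupport S {m | Finsupp.weight w m < n}

variable {w : σ → ℕ}

lemma weightLT_eq_span (n : ℕ) : weightLT S w n =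
    Submodule.span S (basisMonomials σ S '' {m | Finsupp.weight w m < n}) := by
  rw [weightLT, restrictSupport_eq_span, coe_basisMonomials]

lemma monomial_mem_weightLT {m : σ →₀ ℕ} {n : ℕ} (h : Finsupp.weight w m < n) (c : S) :
    monomial m c ∈ weightLT S w n :=
  (monomial_mem_restrictSupport S).mpr (.inl h)

lemma eq_top_of_monomial_mem_of_weightLT_le {P : Submodule S (MvPolynomial σ S)}
    (h : ∀ m, weightLT S w (Finsupp.weight w m) ≤ P → monomial m 1 ∈ P) : P = ⊤ :=
  eq_top_of_basis_mem_of_lt (basisMonomials σ S) (w := Finsupp.weight w) fun m hm => by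
    rw [coe_basisMonomials]
    exact h m (weightLT_eq_span (S := S) (w := w) _ ▸ hm)

lemma monomial_mul_mem_weightLT {f : MvPolynomial σ S} {n : ℕ} (hf : f ∈ weightLT S w n)
    (m : σ →₀ ℕ) : monomial m 1 * f ∈ weightLT S w (Finsupp.weight w m + n) := by
  have hle : weightLT S w n ≤
      (weightLT S w (Finsupp.weight w m + n)).comap (LinearMap.mulLeft S (monomial m 1)) := by
    rw [weightLT_eq_span, Submodule.span_le, Set.image_subset_iff]
    intro l hl
    simpa [monomial_mul] using monomial_mem_weightLT (by rw [map_add]; gcongr; exact hl) 1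
  exact hle hf

lemma pderiv_mem_weightLT {f : MvPolynomial σ S} {n : ℕ} {i : σ}
    (hf : f ∈ weightLT S w (n + w i)) : pderiv i f ∈ weightLT S w n := by
  have hle : weightLT S w (n + w i) ≤ (weightLT S w n).comap (pderiv i).toLinearMap := by
    rw [weightLT_eq_span, Submodule.span_le, Set.image_subset_iff]
    intro m hm
    simp only [coe_basisMonomials, Set.mem_preimage, SetLike.mem_coe, Submodule.mem_comap,
      Derivation.coeFn_coe, pderiv_monomial, one_mul]
    rcases eq_or_ne (m i) 0 with hmi | hmi
    · simp [hmi]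
    · refine monomial_mem_weightLT ?_ _
      have hle : Finsupp.single i 1 ≤ m := by
        rw [Finsupp.single_le_iff]; omega
      have hsplit := congrArg (Finsupp.weight w) (tsub_add_cancel_of_le hle)
      rw [map_add, Finsupp.weight_single, one_smul] at hsplit
      have := Set.mem_ofPred_eq ▸ hm
      omega
  exact hle hf

variable {u v : σ →₀ ℕ} {G H : MvPolynomial σ S} {α β : Sˣ}

lemma monomial_mul_sub_smul_mem_weightLT
    (hG : G - monomial u (α : S) ∈ weightLT S w (Finsupp.weight w u)) {m : σ →₀ ℕ} (hm : u ≤ m) :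
    monomial (m - u) 1 * G - α • monomial m 1 ∈ weightLT S w (Finsupp.weight w m) := by
  have hlow := monomial_mul_mem_weightLT hG (m - u)
  rwa [← map_add, tsub_add_cancel_of_le hm, mul_sub, monomial_mul, tsub_add_cancel_of_le hm,
    one_mul, ← mul_one (α : S), ← smul_eq_mul (α : S), ← smul_monomial] at hlow

/-- The exponents of the monomials divisible by neither `X ^ u` nor `X ^ v`. -/
def standardExponents (u v : σ →₀ ℕ) : Set (σ →₀ ℕ) :=
  {m | ¬ u ≤ m ∧ ¬ v ≤ m}

open Classical in
/-- The multiples of `G` and `H`, and the monomials, that have leading monomial `X ^ m` when `G` and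
`H` have leading monomials `X ^ u` and `X ^ v`; multiples of `H` are preferred over those of `G`,
and multiples of `G` over monomials. -/
noncomputable def reducedFamily (u v : σ →₀ ℕ) (G H : MvPolynomial σ S) (m : σ →₀ ℕ) :
    MvPolynomial σ S :=
  if v ≤ m then monomial (m - v) 1 * H else if u ≤ m then monomial (m - u) 1 * G else monomial m 1

lemma reducedFamily_of_le {m : σ →₀ ℕ} (hv : v ≤ m) :
    reducedFamily u v G H m = monomial (m - v) 1 * H :=
  if_pos hv

lemma reducedFamily_of_not_le_of_le {m : σ →₀ ℕ} (hv : ¬ v ≤ m) (hu : u ≤ m) :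
    reducedFamily u v G H m = monomial (m - u) 1 * G := by
  rw [reducedFamily, if_neg hv, if_pos hu]

lemma reducedFamily_of_not_le_of_not_le {m : σ →₀ ℕ} (hu : ¬ u ≤ m) (hv : ¬ v ≤ m) :
    reducedFamily u v G H m = monomial m 1 := by
  rw [reducedFamily, if_neg hv, if_neg hu]

lemma exists_reducedFamily_sub_smul_mem_weightLT
    (hG : G - monomial u (α : S) ∈ weightLT S w (Finsupp.weight w u))
    (hH : H - monomial v (β : S) ∈ weightLT S w (Finsupp.weight w v)) (m : σ →₀ ℕ) :
    ∃ c : Sˣ, reducedFamily u v G H m - c • monomial m 1 ∈ weightLT S w (Finsupp.weight w m) := by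
  by_cases hv : v ≤ m
  · exact ⟨β, by simpa only [reducedFamily_of_le hv] using monomial_mul_sub_smul_mem_weightLT hH hv⟩
  by_cases hu : u ≤ m
  · exact ⟨α, by simpa only [reducedFamily_of_not_le_of_le hv hu]
      using monomial_mul_sub_smul_mem_weightLT hG hu⟩
  · exact ⟨1, by simp [reducedFamily_of_not_le_of_not_le hu hv]⟩

/-- The basis `reducedFamily u v G H` of the polynomial ring, available as soon as `X ^ u` and
`X ^ v` lead `G` and `H`. -/
noncomputable def reducedFamilyBasis
    (hG : G - monomial u (α : S) ∈ weightLT S w (Finsupp.weight w u))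
    (hH : H - monomial v (β : S) ∈ weightLT S w (Finsupp.weight w v)) :
    Module.Basis (σ →₀ ℕ) S (MvPolynomial σ S) :=
  basisOfTriangular (basisMonomials σ S) (w := Finsupp.weight w) (v := reducedFamily u v G H)
    fun m => by
      rw [← weightLT_eq_span, coe_basisMonomials]
      exact exists_reducedFamily_sub_smul_mem_weightLT hG hH m

lemma reducedFamilyBasis_apply
    (hG : G - monomial u (α : S) ∈ weightLT S w (Finsupp.weight w u))
    (hH : H - monomial v (β : S) ∈ weightLT S w (Finsupp.weight w v)) (m : σ →₀ ℕ) :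
    reducedFamilyBasis hG hH m = reducedFamily u v G H m :=
  basisOfTriangular_apply _ _ m

lemma le_of_le_add_of_disjoint {m : σ →₀ ℕ} (huv : Disjoint u v) (h : v ≤ m + u) : v ≤ m := by
  intro i
  have hle := h i
  have hmin := DFunLike.congr_fun (disjoint_iff.mp huv) i
  simp only [Finsupp.add_apply, Finsupp.inf_apply, bot_eq_zero, Finsupp.zero_apply]
    at hle hmin
  omega

lemma mul_right_mem_span_reducedFamily (U : MvPolynomial σ S) :
    U * H ∈ Submodule.span S (reducedFamily u v G H '' (standardExponents u v)ᶜ) := by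
  set P := Submodule.span S (reducedFamily u v G H '' (standardExponents u v)ᶜ)
  have hP : P.comap (LinearMap.mulRight S H) = ⊤ := by
    refine eq_top_of_monomial_mem_of_weightLT_le (w := fun _ => 0) fun m _ => ?_
    have hv : v ≤ m + v := le_add_self
    exact Submodule.subset_span
      ⟨m + v, fun h => h.2 hv, by simp [reducedFamily_of_le hv]⟩
  exact (hP ▸ Submodule.mem_top : U ∈ P.comap (LinearMap.mulRight S H))

/-- Multiples of `X ^ v * G`, which are not in the family, are reduced with the syzygy
`H * G = G * H`. -/
lemma mul_left_mem_span_reducedFamily (huv : Disjoint u v)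
    (hH : H - monomial v (β : S) ∈ weightLT S w (Finsupp.weight w v)) (U : MvPolynomial σ S) :
    U * G ∈ Submodule.span S (reducedFamily u v G H '' (standardExponents u v)ᶜ) := by
  set P := Submodule.span S (reducedFamily u v G H '' (standardExponents u v)ᶜ)
  have hP : P.comap (LinearMap.mulRight S G) = ⊤ := by
    refine eq_top_of_monomial_mem_of_weightLT_le (w := w) fun m ih => ?_
    by_cases hv : v ≤ m
    · have hlow := ih (monomial_mul_sub_smul_mem_weightLT hH hv)
      have hHG : monomial (m - v) 1 * H ∈ P.comap (LinearMap.mulRight S G) := by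
        simpa [mul_right_comm] using mul_right_mem_span_reducedFamily (monomial (m - v) 1 * G)
      exact (Submodule.smul_mem_iff_of_isUnit _ β.isUnit).mp
        ((Submodule.sub_mem_iff_right _ hHG).mp hlow)
    · have hv' : ¬ v ≤ m + u := fun h => hv (le_of_le_add_of_disjoint huv h)
      have hu : u ≤ m + u := le_add_self
      exact Submodule.subset_span
        ⟨m + u, fun h => h.1 hu, by simp [reducedFamily_of_not_le_of_le hv' hu]⟩
  exact (hP ▸ Submodule.mem_top : U ∈ P.comap (LinearMap.mulRight S G))

lemma span_reducedFamily_eq_span_pair (huv : Disjoint u v)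
    (hH : H - monomial v (β : S) ∈ weightLT S w (Finsupp.weight w v)) :
    Submodule.span S (reducedFamily u v G H '' (standardExponents u v)ᶜ) =
      (Ideal.span {G, H}).restrictScalars S := by
  apply le_antisymm
  · rw [Submodule.span_le]
    rintro _ ⟨m, hm, rfl⟩
    change _ ∈ Ideal.span {G, H}
    by_cases hv : v ≤ m
    · rw [reducedFamily_of_le hv]
      exact Ideal.mul_mem_left _ _ (Ideal.subset_span (by simp))
    · rw [reducedFamily_of_not_le_of_le hv (not_not.mp fun hu => hm ⟨hu, hv⟩)]
      exact Ideal.mul_mem_left _ _ (Ideal.subset_span (by simp))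
  · intro f hf
    obtain ⟨g, h, rfl⟩ := Ideal.mem_span_pair.mp hf
    exact add_mem (mul_left_mem_span_reducedFamily huv hH g) (mul_right_mem_span_reducedFamily h)

/-- The basis of `S[X] / (G, H)` by the monomials divisible by neither leading monomial, when the
leading monomials of `G` and `H` are coprime. -/
noncomputable def quotientSpanPairBasis (huv : Disjoint u v)
    (hG : G - monomial u (α : S) ∈ weightLT S w (Finsupp.weight w u))
    (hH : H - monomial v (β : S) ∈ weightLT S w (Finsupp.weight w v)) :
    Module.Basis (standardExponents u v) S (MvPolynomial σ S ⧸ Ideal.span {G, H}) :=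
  basisOfKerEqSpanCompl (reducedFamilyBasis hG hH)
    (π := (Ideal.Quotient.mkₐ S (Ideal.span {G, H})).toLinearMap)
    (Ideal.Quotient.mkₐ_surjective S _) <| by
    rw [funext (reducedFamilyBasis_apply hG hH), span_reducedFamily_eq_span_pair huv hH]
    ext f
    simp [Ideal.Quotient.eq_zero_iff_mem]

lemma quotientSpanPairBasis_apply (huv : Disjoint u v)
    (hG : G - monomial u (α : S) ∈ weightLT S w (Finsupp.weight w u))
    (hH : H - monomial v (β : S) ∈ weightLT S w (Finsupp.weight w v))
    (m : standardExponents u v) :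
    quotientSpanPairBasis huv hG hH m = Ideal.Quotient.mk _ (monomial m 1) :=
  (basisOfKerEqSpanCompl_apply _ _ _ m).trans <| congrArg (Ideal.Quotient.mk _) <|
    (reducedFamilyBasis_apply hG hH m).trans (reducedFamily_of_not_le_of_not_le m.2.1 m.2.2)

end CoprimeLeadingMonomials

section LeftMultiplication

variable {ι S T A B : Type*} [Fintype ι] [DecidableEq ι] [CommRing S] [CommRing T] [CommRing A]
  [CommRing B] [Algebra S A] [Algebra T B]

lemma leftMulMatrix_map {φ : S →+* T} {ψ : A →+* B}
    (hψ : ψ.comp (algebraMap S A) = (algebraMap T B).comp φ) {b : Module.Basis ι S A}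
    {b' : Module.Basis ι T B} (hb : ∀ i, ψ (b i) = b' i) (x : A) :
    Algebra.leftMulMatrix b' (ψ x) = (Algebra.leftMulMatrix b x).map φ := by
  have hrepr : ∀ y i, b'.repr (ψ y) i = φ (b.repr y i) := by
    intro y i
    have hy : ψ y = ∑ j, φ (b.repr y j) • b' j := by
      conv_lhs => rw [← b.sum_repr y, map_sum]
      refine Finset.sum_congr rfl fun j _ => ?_
      rw [Algebra.smul_def, map_mul, hb, Algebra.smul_def]
      exact congrArg (· * b' j) (DFunLike.congr_fun hψ _)
    rw [hy, b'.repr_sum_self]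
  ext i j
  rw [Matrix.map_apply, Algebra.leftMulMatrix_eq_repr_mul, Algebra.leftMulMatrix_eq_repr_mul,
    ← hb, ← map_mul, hrepr]

variable {K N : Type*} [Field K] [CommRing N] [Algebra K N]

lemma range_lmul (f : N) :
    LinearMap.range (Algebra.lmul K N f) = (Ideal.span {f}).restrictScalars K := by
  ext x
  rw [LinearMap.mem_range, Submodule.restrictScalars_mem, Ideal.mem_span_singleton']
  exact exists_congr fun y => by rw [mul_comm]; rfl

lemma finrank_quotient_add_finrank_range_lmul [Module.Finite K N] (f : N) :
    Module.finrank K (N ⧸ Ideal.span {f}) +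
      Module.finrank K (LinearMap.range (Algebra.lmul K N f)) = Module.finrank K N := by
  rw [range_lmul]
  exact Submodule.finrank_quotient_add_finrank ((Ideal.span {f}).restrictScalars K)

lemma rootMultiplicity_zero_charpoly_lmul [Module.Finite K N] {f : N}
    (hf : IsIdempotentElem (Ideal.span {f})) :
    (Algebra.lmul K N f).charpoly.rootMultiplicity 0 = Module.finrank K (N ⧸ Ideal.span {f}) := by
  have hgen : (Algebra.lmul K N f).maxGenEigenspace 0 = LinearMap.ker (Algebra.lmul K N f) := by
    ext x
    have hlmul : ∀ k : ℕ, (Algebra.lmul K N f ^ k) x = f ^ k * x := fun k => by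
      rw [← map_pow]; rfl
    simp only [Module.End.mem_maxGenEigenspace, zero_smul, sub_zero, LinearMap.mem_ker, hlmul]
    change _ ↔ f * x = 0
    constructor
    · rintro ⟨k, hk⟩
      obtain ⟨g, hg⟩ : f ^ (k + 1) ∣ f := by
        rw [← Ideal.mem_span_singleton, ← Ideal.span_singleton_pow, hf.pow_succ_eq]
        exact Ideal.mem_span_singleton_self f
      calc f * x = f * g * (f ^ k * x) := by nth_rw 1 [hg]; ring
        _ = 0 := by rw [hk, mul_zero]
    · intro hx
      exact ⟨1, by rwa [pow_one]⟩
  rw [← LinearMap.finrank_maxGenEigenspace_eq, hgen]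
  have hrank := (Algebra.lmul K N f).finrank_range_add_finrank_ker
  have hquot := finrank_quotient_add_finrank_range_lmul (K := K) f
  omega

end LeftMultiplication

section Determinant

lemma exists_basis_forall_mem_finset_mem {n K V : Type*} [Finite n] [Field K] [AddCommGroup V]
    [Module K V] (b₀ : Module.Basis n K V) (W : Submodule K V) :
    ∃ (c : Module.Basis n K V) (s : Finset n),
      s.card = Module.finrank K W ∧ ∀ i ∈ s, c i ∈ W := by
  have : Module.Finite K V := .of_basis b₀
  obtain ⟨W', hW'⟩ := W.exists_isCompl
  let b := ((Module.finBasis K W).prod (Module.finBasis K W')).map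
    (Submodule.prodEquivOfIsCompl W W' hW')
  let e := b.indexEquiv b₀
  refine ⟨b.reindex e,
    Finset.univ.map (Function.Embedding.inl.trans e.toEmbedding), by simp, fun i hi => ?_⟩
  obtain ⟨k, -, rfl⟩ := Finset.mem_map.mp hi
  simp [b]

variable {n R K : Type*} [Fintype n] [DecidableEq n] [CommRing R] [Field K]

lemma det_mem_pow_card_of_cols {I : Ideal R} {M : Matrix n n R} {s : Finset n}
    (h : ∀ j ∈ s, ∀ i, M i j ∈ I) : M.det ∈ I ^ s.card := by
  rw [Matrix.det_apply]
  refine sum_mem fun σ _ => ?_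
  rw [Units.smul_def, zsmul_eq_mul, ← Finset.prod_mul_prod_compl s]
  refine Ideal.mul_mem_left _ _ (Ideal.mul_mem_right _ _ ?_)
  rw [← Finset.prod_const]
  exact Ideal.prod_mem_prod fun j hj => h j hj _

lemma det_mem_ker_pow {φ : R →+* K} (hφ : Function.Surjective φ) (M : Matrix n n R) :
    M.det ∈ RingHom.ker φ ^ (Fintype.card n - (M.map φ).rank) := by
  obtain ⟨c, s, hs, hc⟩ :=
    exists_basis_forall_mem_finset_mem (Pi.basisFun K n) (LinearMap.ker (M.map φ).mulVecLin)
  let P : Matrix n n R := .of fun i j => Function.surjInv hφ (c j i)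
  have hP : φ.mapMatrix P = (Pi.basisFun K n).toMatrix c := by
    ext i j
    simp [P, Function.surjInv_eq, Module.Basis.toMatrix_apply]
  have hdetP : P.det ∉ RingHom.ker φ := by
    rw [RingHom.mem_ker, RingHom.map_det, hP, ← Module.Basis.det_apply]
    exact ((Pi.basisFun K n).isUnit_det c).ne_zero
  have hMP : (M * P).det ∈ RingHom.ker φ ^ s.card := by
    refine det_mem_pow_card_of_cols fun j hj i => ?_
    have := congrFun (LinearMap.mem_ker.mp (hc j hj)) i
    rw [RingHom.mem_ker, Matrix.mul_apply, map_sum]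
    simpa [P, Matrix.mulVec, dotProduct, Function.surjInv_eq] using this
  have hcard : s.card = Fintype.card n - (M.map φ).rank := by
    have := (M.map φ).mulVecLin.finrank_range_add_finrank_ker
    rw [Module.finrank_fintype_fun_eq_card] at this
    rw [hs, Matrix.rank]
    omega
  have := RingHom.ker_isMaximal_of_surjective φ hφ
  rw [Matrix.det_mul, mul_comm, hcard] at hMP
  exact (Ideal.IsMaximal.mul_mem_pow _ hMP).resolve_left hdetP

end Determinant

section RegularLocal

open IsLocalRing

lemma isRegularLocal_iff_isRegularLocalRing (S : Type) [CommRing S] :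
    IsRegularLocal S ↔ IsRegularLocalRing S := by
  constructor
  · rintro ⟨_, _, s, hs, hcard⟩
    refine .of_spanFinrank_maximalIdeal_le S ?_
    rw [← hcard, ← hs]
    have hle := Submodule.spanFinrank_span_le_ncard_of_finite (R := S) s.finite_toSet
    rw [Set.ncard_coe_finset] at hle
    exact Nat.cast_le (α := WithBot ℕ∞).mpr hle
  · intro h
    obtain ⟨s, hs, hspan⟩ := Submodule.FG.exists_span_finset_card_eq_spanFinrank
      (maximalIdeal S).fg_of_isNoetherianRing
    refine ⟨inferInstance, inferInstance, s, hspan, ?_⟩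
    rw [← h.spanFinrank_maximalIdeal, hs]
    rfl

section LocalRing

variable {L : Type*} [CommRing L] [IsLocalRing L]

lemma map_mk_maximalIdeal (I : Ideal L) [IsLocalRing (L ⧸ I)] :
    (maximalIdeal L).map (Ideal.Quotient.mk I) = maximalIdeal (L ⧸ I) := by
  have hI : I ≤ maximalIdeal L := le_maximalIdeal fun h =>
    not_subsingleton (L ⧸ I) (Ideal.Quotient.subsingleton_iff.mpr h)
  exact eq_maximalIdeal (Ideal.IsMaximal.map_of_surjective_of_ker_le
    Ideal.Quotient.mk_surjective (by rwa [Ideal.mk_ker]))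

lemma spanFinrank_maximalIdeal_le_of_le_sq [IsNoetherianRing L] {I : Ideal L}
    (hI : I ≤ maximalIdeal L ^ 2) :
    (maximalIdeal L).spanFinrank ≤
      ((maximalIdeal L).map (Ideal.Quotient.mk I)).spanFinrank := by
  classical
  obtain ⟨s, hs, hspan⟩ := Submodule.FG.exists_span_finset_card_eq_spanFinrank
    ((maximalIdeal L).map (Ideal.Quotient.mk I)).fg_of_isNoetherianRing
  let t : Finset L := s.image (Function.surjInv Ideal.Quotient.mk_surjective)
  have hmap : (Ideal.span (t : Set L)).map (Ideal.Quotient.mk I) =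
      (maximalIdeal L).map (Ideal.Quotient.mk I) := by
    rw [Ideal.map_span, Finset.coe_image, ← Set.image_comp,
      (Function.rightInverse_surjInv Ideal.Quotient.mk_surjective).comp_eq_id, Set.image_id]
    exact hspan
  have hsup : Ideal.span (t : Set L) ⊔ I = maximalIdeal L := by
    have := congrArg (Ideal.comap (Ideal.Quotient.mk I)) hmap
    rwa [Ideal.comap_map_of_surjective' _ Ideal.Quotient.mk_surjective,
      Ideal.comap_map_of_surjective' _ Ideal.Quotient.mk_surjective, Ideal.mk_ker,
      sup_eq_left.mpr (hI.trans (Ideal.pow_le_self two_ne_zero))] at this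
  have hnakayama : maximalIdeal L ≤ Ideal.span (t : Set L) := by
    refine Submodule.le_of_le_smul_of_le_jacobson_bot (I := maximalIdeal L)
      (maximalIdeal L).fg_of_isNoetherianRing (maximalIdeal_le_jacobson _) ?_
    rw [smul_eq_mul, ← pow_two]
    exact hsup.ge.trans (sup_le_sup_left hI _)
  calc (maximalIdeal L).spanFinrank
      = (Ideal.span (t : Set L)).spanFinrank :=
        congrArg _ (hnakayama.antisymm (le_sup_left.trans hsup.le))
    _ ≤ t.card := by
        simpa using Submodule.spanFinrank_span_le_ncard_of_finite (R := L) t.finite_toSet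
    _ ≤ _ := Finset.card_image_le.trans hs.le

lemma exists_span_le_span_erase_sup_span_singleton [DecidableEq L] {s : Finset L} {x : L}
    (hx : x ∈ Ideal.span (s : Set L)) (hx' : x ∉ maximalIdeal L * Ideal.span (s : Set L)) :
    ∃ y ∈ s, Ideal.span (s : Set L) ≤ Ideal.span (s.erase y : Set L) ⊔ Ideal.span {x} := by
  obtain ⟨c, -, hc⟩ := Submodule.mem_span_finset.mp hx
  obtain ⟨y, hys, hy⟩ : ∃ y ∈ s, IsUnit (c y) := by
    contrapose! hx'
    rw [← hc]
    exact sum_mem fun y hy =>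
      Ideal.mul_mem_mul ((mem_maximalIdeal _).mpr (hx' y hy)) (Ideal.subset_span hy)
  refine ⟨y, hys, Ideal.span_le.mpr fun z hz => ?_⟩
  by_cases hzy : z = y
  · subst hzy
    refine (Ideal.unit_mul_mem_iff_mem _ hy).mp ?_
    have hcz : c z * z = x - ∑ i ∈ s.erase z, c i • i := by
      rw [← hc, ← Finset.add_sum_erase s _ hys, smul_eq_mul, add_sub_cancel_right]
    rw [hcz]
    exact sub_mem (Ideal.mem_sup_right (Ideal.mem_span_singleton_self x))
      (Ideal.mem_sup_left (sum_mem fun i hi => Ideal.mul_mem_left _ _ (Ideal.subset_span hi)))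
  · exact Ideal.mem_sup_left (Ideal.subset_span (Finset.mem_erase.mpr ⟨hzy, hz⟩))

lemma spanFinrank_map_mk_maximalIdeal_lt [IsNoetherianRing L] {x : L} (hx : x ∈ maximalIdeal L)
    (hx' : x ∉ maximalIdeal L ^ 2) :
    ((maximalIdeal L).map (Ideal.Quotient.mk (Ideal.span {x}))).spanFinrank <
      (maximalIdeal L).spanFinrank := by
  classical
  obtain ⟨s, hs, hspan⟩ := Submodule.FG.exists_span_finset_card_eq_spanFinrank
    (maximalIdeal L).fg_of_isNoetherianRing
  change Ideal.span _ = _ at hspan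
  rw [pow_two] at hx'
  nth_rw 2 [← hspan] at hx'
  obtain ⟨y, hys, hy⟩ := exists_span_le_span_erase_sup_span_singleton (hspan.symm ▸ hx) hx'
  have hmap : (maximalIdeal L).map (Ideal.Quotient.mk (Ideal.span {x})) =
      (Ideal.span (s.erase y : Set L)).map (Ideal.Quotient.mk (Ideal.span {x})) := by
    rw [← hspan]
    refine le_antisymm ((Ideal.map_mono hy).trans ?_)
      (Ideal.map_mono (Ideal.span_mono (Finset.coe_subset.mpr (s.erase_subset y))))
    rw [Ideal.map_sup, Ideal.map_quotient_self, sup_bot_eq]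
  calc _ ≤ (Ideal.span (s.erase y : Set L)).spanFinrank := by
        rw [hmap]
        exact Ideal.spanFinrank_map_le_of_fg _ (Ideal.fg_of_isNoetherianRing _)
    _ ≤ (s.erase y).card := by
        have := Submodule.spanFinrank_span_le_ncard_of_finite (R := L) (s.erase y).finite_toSet
        rwa [Set.ncard_coe_finset] at this
    _ < s.card := Finset.card_erase_lt_of_mem hys
    _ = _ := hs

end LocalRing

lemma isRegularLocalRing_quotient_span_singleton_iff {L : Type*} [CommRing L]
    [IsRegularLocalRing L] {x : L} (hx : x ∈ maximalIdeal L) (hx0 : x ∈ nonZeroDivisors L) :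
    IsRegularLocalRing (L ⧸ Ideal.span {x}) ↔ x ∉ maximalIdeal L ^ 2 := by
  have hne : Ideal.span {x} ≠ ⊤ := fun h => (maximalIdeal.isMaximal L).ne_top
    (top_le_iff.mp (h ▸ (Ideal.span_singleton_le_iff_mem _).mpr hx))
  have : Nontrivial (L ⧸ Ideal.span {x}) := Ideal.Quotient.nontrivial_iff.mpr hne
  have : IsLocalRing (L ⧸ Ideal.span {x}) := .of_surjective' _ Ideal.Quotient.mk_surjective
  have hdim : ringKrullDim (L ⧸ Ideal.span {x}) + 1 = (maximalIdeal L).spanFinrank := by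
    rw [IsRegularLocalRing.spanFinrank_maximalIdeal]
    exact ringKrullDim_quotient_span_singleton_succ_eq_ringKrullDim_of_mem_nonZeroDivisors hx0 hx
  constructor
  · intro h hx2
    have hle := spanFinrank_maximalIdeal_le_of_le_sq
      ((Ideal.span_singleton_le_iff_mem _).mpr hx2)
    rw [map_mk_maximalIdeal] at hle
    rw [← h.spanFinrank_maximalIdeal] at hdim
    have : (maximalIdeal (L ⧸ Ideal.span {x})).spanFinrank + 1 = (maximalIdeal L).spanFinrank := by
      exact_mod_cast hdim
    omega
  · intro hx2
    have hlt := spanFinrank_map_mk_maximalIdeal_lt hx hx2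
    rw [map_mk_maximalIdeal] at hlt
    refine .of_spanFinrank_maximalIdeal_le _ (ENat.WithBot.add_le_add_one_right_iff.mp ?_)
    rw [hdim]
    exact_mod_cast hlt

variable {R : Type*} [CommRing R] (m : Ideal R) [hm : m.IsMaximal]

lemma comap_map_mk_of_isPrime (I : Ideal R) [hM : (m.map (Ideal.Quotient.mk I)).IsPrime] :
    (m.map (Ideal.Quotient.mk I)).comap (Ideal.Quotient.mk I) = m :=
  (hm.eq_of_le (Ideal.comap_ne_top _ hM.ne_top) Ideal.le_comap_map).symm

/-- Localization commutes with quotients. -/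
noncomputable def localizationQuotientEquiv (I : Ideal R)
    [(m.map (Ideal.Quotient.mk I)).IsPrime] :
    Localization.AtPrime (m.map (Ideal.Quotient.mk I)) ≃+*
      Localization.AtPrime m ⧸ I.map (algebraMap R (Localization.AtPrime m)) := by
  have : (m.map (Ideal.Quotient.mk I)).LiesOver m := ⟨(comap_map_mk_of_isPrime m I).symm⟩
  have hsub : Algebra.algebraMapSubmonoid (R ⧸ I) m.primeCompl =
      (m.map (Ideal.Quotient.mk I)).primeCompl :=
    Ideal.algebraMapSubmonoid_primeCompl_of_liesOver_surjective _ m Ideal.Quotient.mk_surjective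
  have : IsLocalization (m.map (Ideal.Quotient.mk I)).primeCompl
      (Localization.AtPrime m ⧸ I.map (algebraMap R (Localization.AtPrime m))) := by
    rw [← hsub]; infer_instance
  exact (IsLocalization.algEquiv (m.map (Ideal.Quotient.mk I)).primeCompl _ _).toRingEquiv

lemma isRegularLocalRing_localization_quotient_iff [IsRegularLocalRing (Localization.AtPrime m)]
    {x : R} (hx0 : x ∈ nonZeroDivisors R)
    [(m.map (Ideal.Quotient.mk (Ideal.span {x}))).IsPrime] :
    IsRegularLocalRing (Localization.AtPrime (m.map (Ideal.Quotient.mk (Ideal.span {x})))) ↔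
      x ∉ m ^ 2 := by
  let L := Localization.AtPrime m
  have hxm : x ∈ m := by
    rw [← comap_map_mk_of_isPrime m (Ideal.span {x}), Ideal.mem_comap,
      Ideal.Quotient.eq_zero_iff_mem.mpr (Ideal.mem_span_singleton_self x)]
    exact zero_mem _
  have e : Localization.AtPrime (m.map (Ideal.Quotient.mk (Ideal.span {x}))) ≃+*
      L ⧸ Ideal.span {algebraMap R L x} :=
    (localizationQuotientEquiv m _).trans
      (Ideal.quotEquivOfEq (by rw [Ideal.map_span, Set.image_singleton]))
  calc _ ↔ IsRegularLocalRing (L ⧸ Ideal.span {algebraMap R L x}) :=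
        ⟨fun h => h.of_ringEquiv e, fun h => h.of_ringEquiv e.symm⟩
    _ ↔ algebraMap R L x ∉ maximalIdeal L ^ 2 := isRegularLocalRing_quotient_span_singleton_iff
        ((IsLocalization.AtPrime.to_map_mem_maximal_iff L m x).mpr hxm)
        (IsLocalization.map_nonZeroDivisors_le m.primeCompl L (Submonoid.mem_map_of_mem _ hx0))
    _ ↔ x ∉ m ^ 2 := by
        rw [← IsLocalization.AtPrime.under_maximalIdeal_pow m L 2]
        rfl

end RegularLocal

section Taylor

variable {σ R : Type*} [CommRing R]

lemma pderiv_pderiv_comm (i j : σ) (G : MvPolynomial σ R) :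
    pderiv i (pderiv j G) = pderiv j (pderiv i G) := by
  classical
  let D (k : σ) : Derivation R (MvPolynomial σ R) (MvPolynomial σ R) := pderiv k
  have hbracket : ⁅D i, D j⁆ = 0 := derivation_ext fun k => by
    simp [D, Derivation.commutator_apply, pderiv_X, Pi.single_apply, apply_ite]
  have h := DFunLike.congr_fun hbracket G
  rwa [Derivation.commutator_apply, Derivation.zero_apply, sub_eq_zero] at h

lemma X_sub_C_mem_ker_eval (P : σ → R) (i : σ) : X i - C (P i) ∈ RingHom.ker (eval P) := by
  simp [RingHom.mem_ker]

lemma sub_taylor_mem_ker_eval_sq [Fintype σ] (P : σ → R) (G : MvPolynomial σ R) :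
    G - C (eval P G) - ∑ i, C (eval P (pderiv i G)) * (X i - C (P i)) ∈
      RingHom.ker (eval P) ^ 2 := by
  classical
  induction G using MvPolynomial.induction_on with
  | C c => simp
  | add f g hf hg =>
    convert add_mem hf hg using 1
    simp only [map_add, add_mul, Finset.sum_add_distrib]
    ring
  | mul_X f n hf =>
    have hlin : ∑ i, C (eval P (pderiv i f)) * (X i - C (P i)) ∈ RingHom.ker (eval P) :=
      sum_mem fun i _ => Ideal.mul_mem_left _ _ (X_sub_C_mem_ker_eval P i)
    have hsq := Ideal.mul_mem_mul hlin (X_sub_C_mem_ker_eval P n)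
    rw [← pow_two] at hsq
    have hsum : ∑ i, C (eval P (pderiv i (f * X n))) * (X i - C (P i)) =
        (∑ i, C (eval P (pderiv i f)) * (X i - C (P i))) * C (P n) +
          C (eval P f) * (X n - C (P n)) := by
      simp [pderiv_X, Pi.single_apply, apply_ite (eval P), apply_ite C, mul_add,
        Finset.sum_add_distrib, Finset.mul_sum, mul_comm, mul_left_comm, add_comm]
    convert add_mem (Ideal.mul_mem_right (X n) _ hf) hsq using 1
    rw [hsum, map_mul, eval_X, C_mul]
    ring

lemma sum_pderiv_mul_mem_sup_sq [Fintype σ] {P : σ → R} {J : Ideal (MvPolynomial σ R)}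
    {G : MvPolynomial σ R} (hG : G ∈ J) (hP : eval P G = 0) :
    ∑ i, C (eval P (pderiv i G)) * (X i - C (P i)) ∈ J ⊔ RingHom.ker (eval P) ^ 2 := by
  have htaylor := sub_taylor_mem_ker_eval_sq P G
  rw [hP, C_0, sub_zero] at htaylor
  exact (Submodule.sub_mem_iff_right _ (Ideal.mem_sup_left hG)).mp (Ideal.mem_sup_right htaylor)

lemma ker_eval_le_sup_sq [Finite σ] {P : σ → R} {J : Ideal (MvPolynomial σ R)}
    (h : ∀ i, X i - C (P i) ∈ J ⊔ RingHom.ker (eval P) ^ 2) :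
    RingHom.ker (eval P) ≤ J ⊔ RingHom.ker (eval P) ^ 2 := by
  have := Fintype.ofFinite σ
  intro G hG
  have htaylor := Ideal.mem_sup_right (S := J) (sub_taylor_mem_ker_eval_sq P G)
  rw [RingHom.mem_ker.mp hG, C_0, sub_zero] at htaylor
  exact (Submodule.sub_mem_iff_left _ (sum_mem fun i _ => Ideal.mul_mem_left _ _ (h i))).mp htaylor

end Taylor

section JacobianAlgebra

variable {S T : Type} [CommRing S] [CommRing T] {p q : ℕ}

/-- The ideal `(G_X, G_Y)`. -/
noncomputable def jacIdeal (G : MvPolynomial (Fin 2) S) : Ideal (MvPolynomial (Fin 2) S) :=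
  Ideal.span {pderiv 0 G, pderiv 1 G}

/-- The Jacobian algebra `S[X, Y] / (G_X, G_Y)`. -/
abbrev JacAlgebra (G : MvPolynomial (Fin 2) S) : Type := MvPolynomial (Fin 2) S ⧸ jacIdeal G

lemma pderiv_mem_jacIdeal (G : MvPolynomial (Fin 2) S) (i : Fin 2) : pderiv i G ∈ jacIdeal G := by
  fin_cases i <;> exact Ideal.subset_span (by simp)

lemma map_jacIdeal (φ : S →+* T) (G : MvPolynomial (Fin 2) S) :
    (jacIdeal G).map (map φ) = jacIdeal (map φ G) := by
  rw [jacIdeal, jacIdeal, Ideal.map_span, Set.image_pair, pderiv_map, pderiv_map]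

lemma map_wPoly (φ : S →+* T) (a : idxSet p q → S) :
    map φ (wPoly S p q a) = wPoly T p q (φ ∘ a) := by
  simp [wPoly]

/-- The terms of `wPoly` other than `Y ^ p` and `X ^ q`. -/
noncomputable def lowerTerms (a : idxSet p q → S) : MvPolynomial (Fin 2) S :=
  ∑ i : idxSet p q, C (a i) * X 0 ^ (i : ℕ × ℕ).1 * X 1 ^ (i : ℕ × ℕ).2

lemma lowerTerms_mem_weightLT (a : idxSet p q → S) :
    lowerTerms a ∈ weightLT S ![p, q] (p * q) := by
  refine sum_mem fun i _ => ?_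
  rw [X_pow_eq_monomial, X_pow_eq_monomial, mul_assoc, monomial_mul, C_mul_monomial]
  refine monomial_mem_weightLT ?_ _
  simpa [map_add, Finsupp.weight_single] using (Finset.mem_filter.mp i.2).2

lemma pderiv_zero_wPoly (a : idxSet p q → S) :
    pderiv 0 (wPoly S p q a) =
      monomial (Finsupp.single 0 (q - 1)) (-(q : S)) + pderiv 0 (lowerTerms a) := by
  simp [wPoly, lowerTerms, X_pow_eq_monomial, pderiv_monomial]

lemma pderiv_one_wPoly (a : idxSet p q → S) :
    pderiv 1 (wPoly S p q a) =
      monomial (Finsupp.single 1 (p - 1)) (p : S) + pderiv 1 (lowerTerms a) := by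
  simp [wPoly, lowerTerms, X_pow_eq_monomial, pderiv_monomial]

lemma pderiv_zero_wPoly_sub_mem_weightLT (a : idxSet p q → S) :
    pderiv 0 (wPoly S p q a) - monomial (Finsupp.single 0 (q - 1)) (-(q : S)) ∈
      weightLT S ![p, q] (Finsupp.weight ![p, q] (Finsupp.single 0 (q - 1))) := by
  rw [pderiv_zero_wPoly, add_sub_cancel_left]
  rcases q with _ | q
  · have : IsEmpty (idxSet p 0) := ⟨fun i => by simpa [idxSet] using i.2⟩
    simp [lowerTerms]
  · refine pderiv_mem_weightLT ?_
    convert lowerTerms_mem_weightLT a using 1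
    simp [Finsupp.weight_single, mul_comm p, add_mul]

lemma pderiv_one_wPoly_sub_mem_weightLT (a : idxSet p q → S) :
    pderiv 1 (wPoly S p q a) - monomial (Finsupp.single 1 (p - 1)) (p : S) ∈
      weightLT S ![p, q] (Finsupp.weight ![p, q] (Finsupp.single 1 (p - 1))) := by
  rw [pderiv_one_wPoly, add_sub_cancel_left]
  rcases p with _ | p
  · have : IsEmpty (idxSet 0 q) := ⟨fun i => by simpa [idxSet] using i.2⟩
    simp [lowerTerms]
  · refine pderiv_mem_weightLT ?_
    convert lowerTerms_mem_weightLT a using 1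
    simp [Finsupp.weight_single, add_mul]

/-- The exponents of the monomials `X ^ i * Y ^ j` with `i < q - 1` and `j < p - 1`, whose classes
form the basis of the Jacobian algebra of `wPoly`. -/
abbrev jacExponents (p q : ℕ) : Set (Fin 2 →₀ ℕ) :=
  standardExponents (Finsupp.single 0 (q - 1)) (Finsupp.single 1 (p - 1))

noncomputable instance : Fintype (jacExponents p q) := by
  refine (Set.Finite.subset (Set.finite_Iic (Finsupp.single 0 (q - 1) + Finsupp.single 1 (p - 1)))
    fun m hm => ?_).fintype
  simp only [standardExponents, Finsupp.single_le_iff, Set.mem_ofPred_eq] at hm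
  intro i
  fin_cases i <;> simp <;> omega

/-- The basis of the Jacobian algebra of `wPoly S p q a` by monomials. -/
noncomputable def jacBasis (hp : IsUnit (p : S)) (hq : IsUnit (q : S)) (a : idxSet p q → S) :
    Module.Basis (jacExponents p q) S (JacAlgebra (wPoly S p q a)) :=
  quotientSpanPairBasis (α := -hq.unit) (β := hp.unit)
    (disjoint_iff.mpr (by ext i; fin_cases i <;> simp <;> rfl))
    (pderiv_zero_wPoly_sub_mem_weightLT a) (pderiv_one_wPoly_sub_mem_weightLT a)

lemma jacBasis_apply (hp : IsUnit (p : S)) (hq : IsUnit (q : S)) (a : idxSet p q → S)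
    (m : jacExponents p q) :
    jacBasis hp hq a m = Ideal.Quotient.mk _ (monomial m 1) :=
  quotientSpanPairBasis_apply _ _ _ m

end JacobianAlgebra

section Tjurina

variable {K : Type} [Field K]

/-- The ring `S[X, Y] / (G_X, G_Y, G)` of the scheme of singular points of `G = 0`, formed as a
quotient of the Jacobian algebra. -/
abbrev TjurinaAlgebra {S : Type} [CommRing S] (G : MvPolynomial (Fin 2) S) : Type :=
  JacAlgebra G ⧸ Ideal.span {Ideal.Quotient.mk (jacIdeal G) G}

/-- The sum of the Tjurina numbers of all singular points of `G = 0` when `K` is algebraically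
closed; it is `0` if the singular points are not isolated. -/
noncomputable def tjurinaNumber (G : MvPolynomial (Fin 2) K) : ℕ :=
  Module.finrank K (TjurinaAlgebra G)

/-- Evaluation at a singular point of `G = 0`. -/
noncomputable def evalTjurina {G : MvPolynomial (Fin 2) K} {P : K × K} (hP : IsSingAt K G P) :
    TjurinaAlgebra G →ₐ[K] K :=
  Ideal.Quotient.liftₐ _ (Ideal.Quotient.liftₐ (jacIdeal G) (aeval ![P.1, P.2]) fun x hx => by
    have : jacIdeal G ≤ RingHom.ker (aeval ![P.1, P.2] : MvPolynomial (Fin 2) K →ₐ[K] K) := by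
      rw [jacIdeal, Ideal.span_le]
      rintro _ (rfl | rfl)
      exacts [hP.2.1, hP.2.2]
    exact this hx) fun x hx => by
    obtain ⟨y, rfl⟩ := Ideal.mem_span_singleton'.mp hx
    rw [map_mul]
    exact (congrArg _ hP.1).trans (mul_zero _)

lemma evalTjurina_mk {G : MvPolynomial (Fin 2) K} {P : K × K} (hP : IsSingAt K G P)
    (H : MvPolynomial (Fin 2) K) :
    evalTjurina hP (Ideal.Quotient.mk _ (Ideal.Quotient.mk _ H)) = eval ![P.1, P.2] H :=
  rfl

lemma encard_isSingAt_le_tjurinaNumber (G : MvPolynomial (Fin 2) K)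
    [Module.Finite K (TjurinaAlgebra G)] :
    {P | IsSingAt K G P}.encard ≤ tjurinaNumber G := by
  have hinj : Function.Injective
      fun P : {P | IsSingAt K G P} => evalTjurina P.2 := by
    intro P Q h
    have hX (i : Fin 2) := DFunLike.congr_fun h (Ideal.Quotient.mk _ (Ideal.Quotient.mk _ (X i)))
    simp only [evalTjurina_mk, eval_X] at hX
    exact Subtype.ext (Prod.ext (hX 0) (hX 1))
  calc {P | IsSingAt K G P}.encard
      ≤ ENat.card (TjurinaAlgebra G →ₐ[K] K) := ENat.card_le_card_of_injective hinj
    _ = Nat.card (TjurinaAlgebra G →ₐ[K] K) := ENat.card_eq_coe_natCard _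
    _ ≤ tjurinaNumber G := Nat.cast_le.mpr (card_algHom_le_finrank K _ K)

end Tjurina

section Discriminant

lemma leftMulMatrix_jacBasis_map {S T : Type} [CommRing S] [CommRing T] {p q : ℕ}
    {a : idxSet p q → S} {a' : idxSet p q → T} {φ : S →+* T}
    (hφ : (jacIdeal (wPoly S p q a)).map (map φ) ≤ jacIdeal (wPoly T p q a'))
    (hp : IsUnit (p : S)) (hq : IsUnit (q : S)) (hp' : IsUnit (p : T)) (hq' : IsUnit (q : T))
    (G : MvPolynomial (Fin 2) S) :
    Algebra.leftMulMatrix (jacBasis hp' hq' a') (Ideal.Quotient.mk _ (map φ G)) =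
      (Algebra.leftMulMatrix (jacBasis hp hq a) (Ideal.Quotient.mk _ G)).map φ := by
  refine leftMulMatrix_map (ψ := Ideal.quotientMap _ (map φ) (Ideal.map_le_iff_le_comap.mp hφ))
    ?_ (fun m => ?_) (Ideal.Quotient.mk _ G)
  · ext s
    exact congrArg (Ideal.Quotient.mk _) (map_C φ s)
  · simp [jacBasis_apply]

variable {K : Type} [Field K] {p q : ℕ}

lemma genDelta_eq_det_leftMulMatrix (hp : IsUnit (p : coefRing K p q))
    (hq : IsUnit (q : coefRing K p q)) :
    genDelta K p q =
      (Algebra.leftMulMatrix (jacBasis hp hq X) (Ideal.Quotient.mk _ (genF K p q))).det := by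
  rw [Algebra.leftMulMatrix_apply, LinearMap.det_toMatrix]
  rfl

lemma isUnit_natCast_of_algebra {n : ℕ} (hn : (n : K) ≠ 0) (A : Type*) [CommRing A]
    [Algebra K A] : IsUnit (n : A) := by
  rw [← map_natCast (algebraMap K A)]
  exact (IsUnit.mk0 _ hn).map _

lemma genDelta_mem_ptMaxIdeal_pow_tjurinaNumber (hp : (p : K) ≠ 0) (hq : (q : K) ≠ 0)
    (a : idxSet p q → K) :
    genDelta K p q ∈ ptMaxIdeal K p q a ^ tjurinaNumber (wPoly K p q a) := by
  let b := jacBasis hp.isUnit hq.isUnit a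
  have : Module.Finite K (JacAlgebra (wPoly K p q a)) := .of_basis b
  let f : JacAlgebra (wPoly K p q a) := Ideal.Quotient.mk _ (wPoly K p q a)
  let M := Algebra.leftMulMatrix (jacBasis (isUnit_natCast_of_algebra hp (coefRing K p q))
    (isUnit_natCast_of_algebra hq _) X) (Ideal.Quotient.mk _ (genF K p q))
  have hgen : map (eval a) (genF K p q) = wPoly K p q a := by
    rw [show genF K p q = wPoly _ p q X from rfl, map_wPoly]
    congr 1
    ext i
    simp
  have hM : M.map (eval a) = Algebra.leftMulMatrix b f := by
    rw [← leftMulMatrix_jacBasis_map, hgen]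
    exact (map_jacIdeal _ _).trans_le (congrArg jacIdeal hgen).le
  have hrank : (M.map (eval a)).rank = Module.finrank K (LinearMap.range (Algebra.lmul K _ f)) := by
    rw [hM, Matrix.rank_eq_finrank_range_toLin _ b b, Algebra.leftMulMatrix_apply,
      Matrix.toLin_toMatrix]
  have hτ : Fintype.card (jacExponents p q) - (M.map (eval a)).rank =
      tjurinaNumber (wPoly K p q a) := by
    have := finrank_quotient_add_finrank_range_lmul (K := K) f
    rw [Module.finrank_eq_card_basis b] at this
    rw [hrank, ← this]
    exact Nat.add_sub_cancel _ _
  rw [genDelta_eq_det_leftMulMatrix, ← hτ]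
  exact det_mem_ker_pow (fun c => ⟨C c, eval_C c⟩) M

lemma zero_mem_idxSet (hp : p ≠ 0) (hq : q ≠ 0) : ((0, 0) : ℕ × ℕ) ∈ idxSet p q := by
  simp [idxSet, Nat.pos_iff_ne_zero, hp, hq]

/-- The restriction of functions on the parameter space to the line through `a` along which only
the constant coefficient varies. -/
noncomputable def lineHom (a : idxSet p q → K) : coefRing K p q →+* Polynomial K :=
  eval₂Hom Polynomial.C fun i => Polynomial.C (a i) + if (i : ℕ × ℕ) = (0, 0) then .X else 0

lemma eval_zero_lineHom (a : idxSet p q → K) (s : coefRing K p q) :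
    (lineHom a s).eval 0 = eval a s := by
  have : (Polynomial.evalRingHom (0 : K)).comp (lineHom a) = eval a := by
    ext i
    · simp [lineHom]
    · by_cases h : (i : ℕ × ℕ) = (0, 0) <;> simp [lineHom, h]
  exact DFunLike.congr_fun this s

lemma X_pow_dvd_lineHom {a : idxSet p q → K} {k : ℕ} {s : coefRing K p q}
    (hs : s ∈ ptMaxIdeal K p q a ^ k) : Polynomial.X ^ k ∣ lineHom a s := by
  have hle : (ptMaxIdeal K p q a).map (lineHom a) ≤ Ideal.span {Polynomial.X} := by
    refine Ideal.map_le_iff_le_comap.mpr fun r hr => ?_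
    rw [Ideal.mem_comap, Ideal.mem_span_singleton, Polynomial.X_dvd_iff,
      Polynomial.coeff_zero_eq_eval_zero, eval_zero_lineHom]
    exact hr
  rw [← Ideal.mem_span_singleton, ← Ideal.span_singleton_pow]
  exact Ideal.pow_right_mono hle k (Ideal.map_pow (lineHom a) _ k ▸ Ideal.mem_map_of_mem _ hs)

lemma map_lineHom_genF (hp : p ≠ 0) (hq : q ≠ 0) (a : idxSet p q → K) :
    map (lineHom a) (genF K p q) = map Polynomial.C (wPoly K p q a) + C Polynomial.X := by
  rw [show genF K p q = wPoly _ p q X from rfl, map_wPoly, map_wPoly]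
  simp only [wPoly, lineHom, coe_eval₂Hom, eval₂_X, C_add, add_mul, Finset.sum_add_distrib,
    Function.comp_apply, ← add_assoc]
  congr 1
  rw [Finset.sum_eq_single ⟨(0, 0), zero_mem_idxSet hp hq⟩]
  · simp
  · intro i _ hi
    rw [if_neg (fun h => hi (Subtype.ext h)), C_0, zero_mul, zero_mul]
  · simp

lemma lineHom_genDelta (hp : (p : K) ≠ 0) (hq : (q : K) ≠ 0) (a : idxSet p q → K) :
    lineHom a (genDelta K p q) = (Algebra.leftMulMatrix (jacBasis hp.isUnit hq.isUnit a)
      (Ideal.Quotient.mk _ (-wPoly K p q a))).charpoly := by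
  have hgen := map_lineHom_genF (p := p) (q := q) (by rintro rfl; simp at hp)
    (by rintro rfl; simp at hq) a
  let b := jacBasis hp.isUnit hq.isUnit a
  let b' := jacBasis (isUnit_natCast_of_algebra hp (Polynomial K))
    (isUnit_natCast_of_algebra hq _) (Polynomial.C ∘ a)
  have hline : (jacIdeal (genF K p q)).map (map (lineHom a)) ≤
      jacIdeal (wPoly (Polynomial K) p q (Polynomial.C ∘ a)) := by
    rw [map_jacIdeal, hgen, jacIdeal, map_add, map_add, pderiv_C, pderiv_C, add_zero, add_zero,
      map_wPoly, jacIdeal]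
  have hconst : Algebra.leftMulMatrix b' (Ideal.Quotient.mk _ (map Polynomial.C (wPoly K p q a))) =
      (Algebra.leftMulMatrix b (Ideal.Quotient.mk _ (wPoly K p q a))).map Polynomial.C :=
    leftMulMatrix_jacBasis_map (by rw [map_jacIdeal, map_wPoly]) _ _ _ _ _
  have hX : Algebra.leftMulMatrix b' (Ideal.Quotient.mk _ (C Polynomial.X)) =
      Matrix.scalar _ Polynomial.X :=
    (Algebra.leftMulMatrix b').commutes Polynomial.X
  calc lineHom a (genDelta K p q)
      = (Algebra.leftMulMatrix b' (Ideal.Quotient.mk _ (map (lineHom a) (genF K p q)))).det := by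
        rw [genDelta_eq_det_leftMulMatrix (isUnit_natCast_of_algebra hp _)
          (isUnit_natCast_of_algebra hq _), RingHom.map_det, RingHom.mapMatrix_apply]
        exact congrArg _ (leftMulMatrix_jacBasis_map hline _ _ _ _ _).symm
    _ = ((Algebra.leftMulMatrix b (Ideal.Quotient.mk _ (wPoly K p q a))).map Polynomial.C +
          Matrix.scalar _ Polynomial.X).det := by rw [hgen, map_add, map_add, hconst, hX]
    _ = _ := by
        rw [Matrix.charpoly, Matrix.charmatrix, map_neg, map_neg, map_neg, sub_neg_eq_add, add_comm,
          RingHom.mapMatrix_apply]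

lemma genDelta_ne_zero (hp : (p : K) ≠ 0) (hq : (q : K) ≠ 0) : genDelta K p q ≠ 0 := by
  intro h
  have hline := lineHom_genDelta hp hq 0
  rw [h, map_zero] at hline
  exact (Matrix.charpoly_monic _).ne_zero hline.symm

lemma le_tjurinaNumber_of_genDelta_mem_pow (hp : (p : K) ≠ 0) (hq : (q : K) ≠ 0)
    {a : idxSet p q → K} (hidem : IsIdempotentElem
      (Ideal.span {Ideal.Quotient.mk (jacIdeal (wPoly K p q a)) (wPoly K p q a)}))
    {k : ℕ} (hk : genDelta K p q ∈ ptMaxIdeal K p q a ^ k) :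
    k ≤ tjurinaNumber (wPoly K p q a) := by
  let b := jacBasis hp.isUnit hq.isUnit a
  have : Module.Finite K (JacAlgebra (wPoly K p q a)) := .of_basis b
  have hneg : Ideal.span {Ideal.Quotient.mk (jacIdeal (wPoly K p q a)) (-wPoly K p q a)} =
      Ideal.span {Ideal.Quotient.mk (jacIdeal (wPoly K p q a)) (wPoly K p q a)} := by
    rw [map_neg, Ideal.span_singleton_neg]
  have hdvd := X_pow_dvd_lineHom hk
  rw [lineHom_genDelta hp hq, Algebra.leftMulMatrix_apply, LinearMap.charpoly_toMatrix] at hdvd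
  calc k ≤ (Algebra.lmul K _ (Ideal.Quotient.mk (jacIdeal (wPoly K p q a))
        (-wPoly K p q a))).charpoly.rootMultiplicity 0 := by
        rw [Polynomial.le_rootMultiplicity_iff (LinearMap.charpoly_monic _).ne_zero]
        simpa only [map_zero, sub_zero] using hdvd
    _ = _ := rootMultiplicity_zero_charpoly_lmul (hneg.symm ▸ hidem)
    _ = tjurinaNumber (wPoly K p q a) :=
        (Ideal.quotientEquivAlgOfEq K hneg).toLinearEquiv.finrank_eq

end Discriminant

section Node

lemma mem_and_mem_of_isUnit_det {R : Type*} [CommRing R] {I : Ideal R} {a b c d x y : R}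
    (hdet : IsUnit (a * d - b * c)) (h₁ : a * x + b * y ∈ I) (h₂ : c * x + d * y ∈ I) :
    x ∈ I ∧ y ∈ I := by
  refine ⟨(Ideal.unit_mul_mem_iff_mem _ hdet).mp ?_, (Ideal.unit_mul_mem_iff_mem _ hdet).mp ?_⟩
  · convert sub_mem (I.mul_mem_left d h₁) (I.mul_mem_left b h₂) using 1
    ring
  · convert sub_mem (I.mul_mem_left a h₂) (I.mul_mem_left c h₁) using 1
    ring

variable {K : Type} [Field K] {G : MvPolynomial (Fin 2) K} {P : K × K}

/-- Modulo the square of the maximal ideal of the point, the partial derivatives are linear forms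
whose matrix is the Hessian, so they generate. -/
lemma ker_eval_le_jacIdeal_sup_sq (h : IsNodeAt K G P) :
    RingHom.ker (eval ![P.1, P.2]) ≤ jacIdeal G ⊔ RingHom.ker (eval ![P.1, P.2]) ^ 2 := by
  have hGX := sum_pderiv_mul_mem_sup_sq (pderiv_mem_jacIdeal G 0) h.1.2.1
  have hGY := sum_pderiv_mul_mem_sup_sq (pderiv_mem_jacIdeal G 1) h.1.2.2
  rw [Fin.sum_univ_two] at hGX hGY
  rw [pderiv_pderiv_comm 1 0] at hGX
  refine ker_eval_le_sup_sq (Fin.forall_fin_two.mpr (mem_and_mem_of_isUnit_det ?_ hGX hGY))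
  rw [← C_mul, ← C_mul, ← C_sub, ← pow_two, ← map_mul, ← map_pow, ← map_sub]
  exact (IsUnit.mk0 _ h.2).map C

lemma isIdempotentElem_map_ker_eval (h : IsNodeAt K G P) :
    IsIdempotentElem ((RingHom.ker (eval ![P.1, P.2])).map (Ideal.Quotient.mk (jacIdeal G))) := by
  refine le_antisymm Ideal.mul_le_left ?_
  have := Ideal.map_mono (f := Ideal.Quotient.mk (jacIdeal G)) (ker_eval_le_jacIdeal_sup_sq h)
  rwa [Ideal.map_sup, Ideal.map_quotient_self, bot_sup_eq, Ideal.map_pow, pow_two] at this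

lemma ker_eval_le_radical_of_unique [IsAlgClosed K] (h : ∀ Q, IsSingAt K G Q → Q = P) :
    RingHom.ker (eval ![P.1, P.2]) ≤ (jacIdeal G ⊔ Ideal.span {G}).radical := by
  rw [← vanishingIdeal_zeroLocus_eq_radical (K := K)]
  intro f hf
  rw [mem_vanishingIdeal_iff]
  intro z hz
  have hzero : ∀ g ∈ jacIdeal G ⊔ Ideal.span {G}, eval ![z 0, z 1] g = 0 := fun g hg => by
    have hz' : ![z 0, z 1] = z := by ext i; fin_cases i <;> rfl
    rw [hz', ← aeval_eq_eval]
    exact mem_zeroLocus_iff.mp hz g hg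
  have hsing : IsSingAt K G (z 0, z 1) :=
    ⟨hzero _ (Ideal.mem_sup_right (Ideal.mem_span_singleton_self G)),
      hzero _ (Ideal.mem_sup_left (pderiv_mem_jacIdeal G 0)),
      hzero _ (Ideal.mem_sup_left (pderiv_mem_jacIdeal G 1))⟩
  have hz' : ![P.1, P.2] = z := by
    rw [← h _ hsing]
    ext i
    fin_cases i <;> rfl
  rwa [← hz', aeval_eq_eval]

lemma span_mk_eq_map_ker_eval [IsAlgClosed K] (hnode : IsNodeAt K G P)
    (huniq : ∀ Q, IsSingAt K G Q → Q = P) :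
    Ideal.span {Ideal.Quotient.mk (jacIdeal G) G} =
      (RingHom.ker (eval ![P.1, P.2])).map (Ideal.Quotient.mk (jacIdeal G)) := by
  refine le_antisymm ?_ ?_
  · rw [Ideal.span_singleton_le_iff_mem]
    exact Ideal.mem_map_of_mem _ hnode.1.1
  · obtain ⟨k, hk⟩ := Ideal.exists_pow_le_of_le_radical_of_fg (ker_eval_le_radical_of_unique huniq)
      (Ideal.fg_of_isNoetherianRing _)
    have := Ideal.map_mono (f := Ideal.Quotient.mk (jacIdeal G))
      ((Ideal.pow_le_pow_right k.le_succ).trans hk)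
    rwa [Ideal.map_sup, Ideal.map_quotient_self, bot_sup_eq, Ideal.map_pow,
      (isIdempotentElem_map_ker_eval hnode).pow_succ_eq, Ideal.map_span,
      Set.image_singleton] at this

lemma tjurinaNumber_eq_one [IsAlgClosed K] (hnode : IsNodeAt K G P)
    (huniq : ∀ Q, IsSingAt K G Q → Q = P) : tjurinaNumber G = 1 := by
  have hinj : Function.Injective (evalTjurina hnode.1) := by
    refine (injective_iff_map_eq_zero _).mpr fun x hx => ?_
    obtain ⟨y, rfl⟩ := Ideal.Quotient.mk_surjective x
    obtain ⟨H, rfl⟩ := Ideal.Quotient.mk_surjective y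
    rw [Ideal.Quotient.eq_zero_iff_mem, span_mk_eq_map_ker_eval hnode huniq]
    exact Ideal.mem_map_of_mem _ hx
  have hsurj : Function.Surjective (evalTjurina hnode.1) := fun c =>
    ⟨algebraMap K _ c, AlgHom.commutes _ c⟩
  exact (AlgEquiv.ofBijective _ ⟨hinj, hsurj⟩).toLinearEquiv.finrank_eq.trans
    (Module.finrank_self K)

end Node

section Hypersurface

variable {K : Type} [Field K] {p q : ℕ} {a : idxSet p q → K}

instance : (ptMaxIdeal K p q a).IsMaximal :=
  RingHom.ker_isMaximal_of_surjective _ fun c => ⟨C c, eval_C c⟩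

lemma isRegularLocal_localization_iff_genDelta_notMem_sq (hp : (p : K) ≠ 0) (hq : (q : K) ≠ 0)
    [hM : (ptMaxIdealBar K p q a).IsPrime] :
    IsRegularLocal (Localization.AtPrime (ptMaxIdealBar K p q a)) ↔
      genDelta K p q ∉ ptMaxIdeal K p q a ^ 2 := by
  have : ((ptMaxIdeal K p q a).map
    (Ideal.Quotient.mk (Ideal.span {genDelta K p q}))).IsPrime := hM
  rw [isRegularLocal_iff_isRegularLocalRing]
  exact isRegularLocalRing_localization_quotient_iff _
    (mem_nonZeroDivisors_of_ne_zero (genDelta_ne_zero hp hq))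

lemma genDelta_mem_sq_of_isSingAt_of_ne (hp : (p : K) ≠ 0) (hq : (q : K) ≠ 0) {P Q : K × K}
    (hP : IsSingAt K (wPoly K p q a) P) (hQ : IsSingAt K (wPoly K p q a) Q) (hPQ : P ≠ Q) :
    genDelta K p q ∈ ptMaxIdeal K p q a ^ 2 := by
  have : Module.Finite K (JacAlgebra (wPoly K p q a)) := .of_basis (jacBasis hp.isUnit hq.isUnit a)
  have hone : 1 < {P | IsSingAt K (wPoly K p q a) P}.encard :=
    Set.one_lt_encard_iff.mpr ⟨P, Q, hP, hQ, hPQ⟩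
  have hτ : 1 < tjurinaNumber (wPoly K p q a) := by
    exact_mod_cast hone.trans_le (encard_isSingAt_le_tjurinaNumber _)
  exact Ideal.pow_le_pow_right hτ (genDelta_mem_ptMaxIdeal_pow_tjurinaNumber hp hq a)

lemma genDelta_notMem_sq_of_isNodeAt_of_unique [IsAlgClosed K] (hp : (p : K) ≠ 0)
    (hq : (q : K) ≠ 0) {P : K × K} (hnode : IsNodeAt K (wPoly K p q a) P)
    (huniq : ∀ Q, IsSingAt K (wPoly K p q a) Q → Q = P) :
    genDelta K p q ∉ ptMaxIdeal K p q a ^ 2 := by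
  intro hmem
  have hidem := isIdempotentElem_map_ker_eval hnode
  rw [← span_mk_eq_map_ker_eval hnode huniq] at hidem
  have hle := le_tjurinaNumber_of_genDelta_mem_pow hp hq hidem hmem
  rw [tjurinaNumber_eq_one hnode huniq] at hle
  exact Nat.not_succ_le_self 1 hle

theorem localization_of_hypersurface_regular_iff_one_node_general [IsAlgClosed K]
    (hp : (p : K) ≠ 0) (hq : (q : K) ≠ 0) (hex : ∃ Q, IsNodeAt K (wPoly K p q a) Q)
    [(ptMaxIdealBar K p q a).IsPrime] :
    IsRegularLocal (Localization.AtPrime (ptMaxIdealBar K p q a)) ↔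
      ∃! Q, IsSingAt K (wPoly K p q a) Q := by
  rw [isRegularLocal_localization_iff_genDelta_notMem_sq hp hq]
  obtain ⟨P, hnode⟩ := hex
  constructor
  · intro h
    refine ⟨P, hnode.1, fun Q hQ => ?_⟩
    by_contra hne
    exact h (genDelta_mem_sq_of_isSingAt_of_ne hp hq hQ hnode.1 hne)
  · exact fun h => genDelta_notMem_sq_of_isNodeAt_of_unique hp hq hnode
      fun Q hQ => h.unique hQ hnode.1

end Hypersurface

/-- Let `C_a` be a nodal curve with at least one node. Then the localization of `R/(Δ)` at
the maximal ideal `m_a` corresponding to `a` is a regular local ring iff `C_a` has exactly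
one node. -/
theorem localization_of_hypersurface_regular_iff_one_node
    (K : Type) [Field K] [IsAlgClosed K] [CharZero K]
    (p q : ℕ) (hp : 1 < p) (hpq : p < q) (hco : Nat.Coprime p q)
    (a : idxSet p q → K)
    (hnodal : ∀ Q : K × K, IsSingAt K (wPoly K p q a) Q → IsNodeAt K (wPoly K p q a) Q)
    (hex : ∃ Q : K × K, IsNodeAt K (wPoly K p q a) Q)
    (hmax : (ptMaxIdealBar K p q a).IsMaximal) :
    IsRegularLocal (Localization.AtPrime (ptMaxIdealBar K p q a) (hp := hmax.isPrime)) ↔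
      (∃! Q : K × K, IsNodeAt K (wPoly K p q a) Q) := by
  have hsing Q : IsNodeAt K (wPoly K p q a) Q ↔ IsSingAt K (wPoly K p q a) Q :=
    ⟨And.left, hnodal Q⟩
  have := hmax.isPrime
  simpa only [hsing] using localization_of_hypersurface_regular_iff_one_node_general
    (Nat.cast_ne_zero.mpr (by omega)) (Nat.cast_ne_zero.mpr (by omega)) hex
end

section
/- Let α ∈ K^I be such that C_α is a nodal curve with l ≥ 1 pairwise distinct nodes (ξ_1,η_1),…,(ξ_l,η_l). Then the l vectors v_i = (ξ_i^ν η_i^μ)_{(ν,μ)∈I} ∈ K^I, i = 1,…,l, are linearly independent over K; equivalently, the l×n matrix (ξ_i^ν η_i^μ) with rows indexed by i = 1,…,l and columns indexed by (ν,μ) ∈ I has rank l. -/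
open MvPolynomial

/-!
Let `f(X, Y) = 0` be the curve and `P i = (x i, y i)` its singular points. A linear relation `c`
between the node vectors gives the rational function
`φ = ∑ i, c i * (f(X, Y) - f(X, y i)) / ((Y - y i) * (X - x i))` on the curve.

* As the `P i` are singular, `φ` maps the product of their ideals into itself. That product contains
  `D = ∏ i, (X - x i)`, so `φ ^ n * D` is regular for every `n`.
* The coefficients of the expansion of `φ` at infinity are combinations of the moments
  `∑ i, c i * x i ^ ν * y i ^ μ`. Those with `ν * p + μ * q ≤ p * q - p - q` vanish, which forces
  `φ` to have a zero at infinity.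

Hence `φ ^ n * D` is regular and vanishes at infinity for large `n`, so it is zero, and `φ = 0`
because the curve is reduced. Multiplying `φ` by a function that is `1` at `P i` and `0` at the
other points isolates the `i`-th summand modulo regular functions, and this summand is regular only
if `c i = 0`.
-/

namespace NodeVectors

open Polynomial AdjoinRoot
open scoped Polynomial.Bivariate

-- Both `Polynomial` and `MvPolynomial` are open, so the bare constants would be ambiguous.
local notation "C" => Polynomial.C
local notation "X" => Polynomial.X

section Weight

variable {R : Type*} [CommRing R] {p q : ℕ} {d e : ℤ} {f G H : R[X][Y]}

/-- Every monomial `X ^ i * Y ^ j` of `G` has weight `i * p + j * q` at most `d`. On a curve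
`Y ^ p = X ^ q + (terms of lower weight)` this bounds the pole order of `G` at infinity. The bound
is an integer so that it can be negative, in which case `G = 0`. -/
def WeightLE (p q : ℕ) (d : ℤ) (G : R[X][Y]) : Prop :=
  ∀ i j, (G.coeff j).coeff i ≠ 0 → (i * p + j * q : ℤ) ≤ d

theorem WeightLE.add (hG : WeightLE p q d G) (hH : WeightLE p q d H) :
    WeightLE p q d (G + H) := by
  intro i j hij
  rw [Polynomial.coeff_add, Polynomial.coeff_add] at hij
  by_cases h : (G.coeff j).coeff i = 0
  · exact hH i j fun h' => hij (by rw [h, h', add_zero])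
  · exact hG i j h

theorem WeightLE.neg (hG : WeightLE p q d G) : WeightLE p q d (-G) := fun i j hij =>
  hG i j fun h => hij (by rw [Polynomial.coeff_neg, Polynomial.coeff_neg, h, neg_zero])

theorem WeightLE.sub (hG : WeightLE p q d G) (hH : WeightLE p q d H) :
    WeightLE p q d (G - H) :=
  sub_eq_add_neg G H ▸ hG.add hH.neg

theorem WeightLE.mul (hG : WeightLE p q d G) (hH : WeightLE p q e H) :
    WeightLE p q (d + e) (G * H) := by
  intro i j hij
  rw [Polynomial.coeff_mul, finsetSum_coeff] at hij
  obtain ⟨⟨j₁, j₂⟩, hj, hj_ne⟩ := Finset.exists_ne_zero_of_sum_ne_zero hij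
  rw [Polynomial.coeff_mul] at hj_ne
  obtain ⟨⟨i₁, i₂⟩, hi, hi_ne⟩ := Finset.exists_ne_zero_of_sum_ne_zero hj_ne
  have hG' := hG i₁ j₁ (left_ne_zero_of_mul hi_ne)
  have hH' := hH i₂ j₂ (right_ne_zero_of_mul hi_ne)
  obtain rfl := Finset.HasAntidiagonal.mem_antidiagonal.1 hi
  obtain rfl := Finset.HasAntidiagonal.mem_antidiagonal.1 hj
  push_cast
  linarith

theorem weightLE_C_mul_X_pow {D : R[X]} {n : ℕ}
    (h : ∀ i, D.coeff i ≠ 0 → (i * p + n * q : ℤ) ≤ d) :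
    WeightLE p q d (C D * Y ^ n) := by
  intro i j hij
  rw [Polynomial.coeff_C_mul_X_pow] at hij
  split_ifs at hij with hj
  · exact hj ▸ h i hij
  · exact absurd (Polynomial.coeff_zero i) hij

theorem weightLE_monomial {m n : ℕ} (r : R) (h : (m * p + n * q : ℤ) ≤ d) :
    WeightLE p q d (C (C r * X ^ m) * Y ^ n) := by
  refine weightLE_C_mul_X_pow fun i hi => ?_
  rw [Polynomial.coeff_C_mul_X_pow] at hi
  obtain rfl : i = m := of_not_not fun hne => hi (if_neg hne)
  exact h

theorem weightLE_C {D : R[X]} : WeightLE p q (D.natDegree * p) (C D) := by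
  rw [← mul_one (C D), ← pow_zero Y]
  refine weightLE_C_mul_X_pow fun i hi => ?_
  have : (i : ℤ) ≤ D.natDegree := mod_cast le_natDegree_of_ne_zero hi
  push_cast
  nlinarith

theorem WeightLE.pow (hG : WeightLE p q d G) (n : ℕ) : WeightLE p q (n * d) (G ^ n) := by
  induction n with
  | zero => simpa using weightLE_C (p := p) (q := q) (D := (1 : R[X]))
  | succ n ih =>
    rw [pow_succ]
    convert ih.mul hG using 1
    push_cast
    ring

theorem WeightLE.modByMonic [Nontrivial R] (hG : WeightLE p q d G) (hf : f.Monic)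
    (hfw : WeightLE p q (f.natDegree * q) f) : WeightLE p q d (G %ₘ f) := by
  induction G using Polynomial.degree_lt_wf.induction with | _ G ih
  by_cases hlt : G.degree < f.degree
  · rwa [(modByMonic_eq_self_iff hf).2 hlt]
  by_cases hG0 : G = 0
  · rwa [hG0, zero_modByMonic, ← hG0]
  set T : R[X][Y] := C G.leadingCoeff * Y ^ (G.natDegree - f.natDegree)
  have hTw : WeightLE p q (d - f.natDegree * q) T := by
    refine weightLE_C_mul_X_pow fun i hi => ?_
    have := hG i G.natDegree hi
    rw [Nat.cast_sub (natDegree_le_natDegree (not_lt.1 hlt))]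
    linarith
  have hred : WeightLE p q d (G - f * T) := hG.sub (by simpa using hfw.mul hTw)
  have hdvd : f ∣ G - (G - f * T) := ⟨T, by ring⟩
  rw [modByMonic_eq_of_dvd_sub hf hdvd]
  exact ih _ (div_wf_lemma ⟨not_lt.1 hlt, hG0⟩ hf) hred

theorem WeightLE.eq_zero_of_C_mul {D : R[X]} (hD : D.Monic) (hG : WeightLE p q d (C D * G))
    (hd : d < D.natDegree * p) : G = 0 := by
  ext1 j
  rw [Polynomial.coeff_zero]
  by_contra hne
  have hlead := hG (D * G.coeff j).natDegree j
    (by rw [Polynomial.coeff_C_mul]; exact leadingCoeff_ne_zero.2 (hD.mul_right_ne_zero hne))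
  rw [hD.natDegree_mul' hne] at hlead
  have : 0 ≤ ((G.coeff j).natDegree * p + j * q : ℤ) := by positivity
  push_cast at hlead
  linarith

theorem WeightLE.mk_eq_zero [Nontrivial R] {D : R[X]} (hG : WeightLE p q d G) (hf : f.Monic)
    (hfw : WeightLE p q (f.natDegree * q) f) (hD : D.Monic) (hd : d < D.natDegree * p)
    (hmem : mk f G ∈ Ideal.span {of f D}) : mk f G = 0 := by
  obtain ⟨z, hz⟩ := Ideal.mem_span_singleton.1 hmem
  obtain ⟨H, rfl⟩ := mk_surjective z
  rw [← mk_C, ← map_mul, mk_eq_mk] at hz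
  have hrem : G %ₘ f = C D * (H %ₘ f) := by
    rw [modByMonic_eq_of_dvd_sub hf hz, ← Polynomial.smul_eq_C_mul, ← Polynomial.smul_eq_C_mul,
      smul_modByMonic]
  have hH : H %ₘ f = 0 := (hrem ▸ hG.modByMonic hf hfw).eq_zero_of_C_mul hD hd
  rwa [hH, mul_zero, modByMonic_eq_zero_iff_dvd hf, ← AdjoinRoot.mk_eq_zero] at hrem

end Weight

section SingularPoint

variable {R : Type*} [CommRing R] {f : R[X][Y]} {P : R × R}

/-- The ideal of the coordinate ring `R[X][Y] / (f)` generated by `X - x` and `Y - y`; it is proper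
only if the point `P = (x, y)` lies on the curve `f = 0`. -/
noncomputable def pointIdeal (f : R[X][Y]) (P : R × R) : Ideal (AdjoinRoot f) :=
  Ideal.span {of f (X - C P.1), mk f (Y - C (C P.2))}

theorem mk_mem_pointIdeal {G : R[X][Y]} (hG : G.evalEval P.1 P.2 = 0) :
    mk f G ∈ pointIdeal f P := by
  rw [pointIdeal, ← mk_C, ← Set.image_pair, ← Ideal.map_span]
  exact Ideal.mem_map_of_mem _ (mem_span_C_X_sub_C_X_sub_C_iff_eval_eval_eq_zero.2 hG)

theorem isCoprime_pointIdeal {K : Type*} [Field K] (f : K[X][Y]) {P Q : K × K} (hPQ : P ≠ Q) :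
    IsCoprime (pointIdeal f P) (pointIdeal f Q) := by
  rw [Ideal.isCoprime_iff_sup_eq]
  have isUnit_of_ne {a b : K} (h : a ≠ b) : IsUnit (of f (C (a - b))) :=
    ((sub_ne_zero.2 h).isUnit.map Polynomial.C).map (of f)
  obtain h | h := not_and_or.1 (mt Prod.ext_iff.2 hPQ)
  · refine Ideal.eq_top_of_isUnit_mem _ ?_ (isUnit_of_ne (Ne.symm h))
    rw [show C (Q.1 - P.1) = (X - C P.1) - (X - C Q.1) by rw [Polynomial.C_sub]; ring, map_sub]
    exact sub_mem (Ideal.mem_sup_left (Ideal.subset_span (Set.mem_insert _ _)))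
      (Ideal.mem_sup_right (Ideal.subset_span (Set.mem_insert _ _)))
  · refine Ideal.eq_top_of_isUnit_mem _ ?_ (isUnit_of_ne (Ne.symm h))
    rw [← mk_C, show C (C (Q.2 - P.2)) = (Y - C (C P.2)) - (Y - C (C Q.2)) by
      simp only [Polynomial.C_sub]; ring, map_sub]
    exact sub_mem (Ideal.mem_sup_left (Ideal.subset_span (Set.mem_insert_of_mem _ rfl)))
      (Ideal.mem_sup_right (Ideal.subset_span (Set.mem_insert_of_mem _ rfl)))

/-- `P` is a singular point of the curve `f = 0`: the counterpart of `IsSingAt` for polynomials in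
`Y` over `R[X]`. -/
structure IsSingular (f : R[X][Y]) (P : R × R) : Prop where
  evalEval_eq_zero : f.evalEval P.1 P.2 = 0
  eval_derivative_eval : (derivative (f.eval (C P.2))).eval P.1 = 0
  evalEval_derivative : (derivative f).evalEval P.1 P.2 = 0

/-- The difference quotient `(f(X, Y) - f(X, y)) / (Y - y)`. -/
noncomputable def ySlope (f : R[X][Y]) (y : R) : R[X][Y] := f /ₘ (Y - C (C y))

theorem Y_sub_C_mul_ySlope (f : R[X][Y]) (y : R) :
    (Y - C (C y)) * ySlope f y = f - C (f.eval (C y)) := by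
  rw [ySlope, X_sub_C_mul_divByMonic_eq_sub_modByMonic, modByMonic_X_sub_C_eq_C_eval]

theorem IsSingular.mk_ySlope_mem (hP : IsSingular f P) :
    AdjoinRoot.mk f (ySlope f P.2) ∈ pointIdeal f P := by
  have h := congrArg (fun G => (derivative G).evalEval P.1 P.2) (Y_sub_C_mul_ySlope f P.2)
  refine mk_mem_pointIdeal ?_
  simpa [derivative_mul, evalEval_add, evalEval_mul, evalEval_sub, evalEval_C,
    hP.evalEval_derivative] using h

theorem IsSingular.exists_eval_eq_mul (hP : IsSingular f P) :
    ∃ r : R[X], f.eval (C P.2) = (X - C P.1) * r ∧ of f r ∈ pointIdeal f P := by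
  obtain ⟨r, hr⟩ : X - C P.1 ∣ f.eval (C P.2) := dvd_iff_isRoot.2 hP.evalEval_eq_zero
  refine ⟨r, hr, ?_⟩
  have h := hP.eval_derivative_eval
  rw [hr] at h
  rw [← mk_C]
  refine mk_mem_pointIdeal ?_
  simpa [derivative_mul, evalEval_C] using h

/-- On the curve, `ySlope f y / (X - x)` equals `-(f(X, y) / (X - x)) / (Y - y)`, so it sends both
generators of the ideal of a singular point `(x, y)` back into that ideal. -/
theorem IsSingular.span_ySlope_mul_pointIdeal_le (hP : IsSingular f P) :
    Ideal.span {AdjoinRoot.mk f (ySlope f P.2)} * pointIdeal f P ≤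
      Ideal.span {of f (X - C P.1)} * pointIdeal f P := by
  obtain ⟨r, hr, hr_mem⟩ := hP.exists_eval_eq_mul
  have hslope := congrArg (AdjoinRoot.mk f) (Y_sub_C_mul_ySlope f P.2)
  rw [hr, map_mul, map_sub (AdjoinRoot.mk f) f, mk_self, mk_C, map_mul] at hslope
  rw [Ideal.span_singleton_mul_le_span_singleton_mul]
  intro g hg
  obtain ⟨a, b, rfl⟩ := Ideal.mem_span_pair.1 hg
  refine ⟨AdjoinRoot.mk f (ySlope f P.2) * a - of f r * b,
    sub_mem (Ideal.mul_mem_right _ _ hP.mk_ySlope_mem) (Ideal.mul_mem_right _ _ hr_mem), ?_⟩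
  linear_combination b * hslope

theorem eq_zero_of_C_mul_mk_ySlope_mem [IsDomain R] (hf : f.Monic) (hdeg : 0 < f.natDegree)
    {c x y : R} (h : of f (C c) * mk f (ySlope f y) ∈ Ideal.span {of f (X - C x)}) : c = 0 := by
  obtain ⟨z, hz⟩ := Ideal.mem_span_singleton.1 h
  obtain ⟨G, rfl⟩ := mk_surjective z
  rw [← mk_C, ← mk_C, ← map_mul, ← map_mul, mk_eq_mk] at hz
  have hslope_monic : (ySlope f y).Monic := by
    rw [Monic, ySlope, leadingCoeff_divByMonic_X_sub_C _
      (natDegree_pos_iff_degree_pos.1 hdeg).ne', hf]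
  have hdvd : f.map (evalRingHom x) ∣ C c * (ySlope f y).map (evalRingHom x) := by
    simpa using Polynomial.map_dvd (evalRingHom x) hz
  have hlt : (C c * (ySlope f y).map (evalRingHom x)).degree < (f.map (evalRingHom x)).degree := by
    rw [hf.degree_map, ← Polynomial.smul_eq_C_mul]
    refine (degree_smul_le _ _).trans_lt ?_
    rw [hslope_monic.degree_map]
    refine degree_lt_degree ?_
    rw [ySlope, natDegree_divByMonic _ (monic_X_sub_C _), natDegree_X_sub_C]
    exact Nat.sub_lt hdeg one_pos
  have hzero : C c * (ySlope f y).map (evalRingHom x) = 0 := by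
    by_contra hne
    exact (hf.map _).not_dvd_of_degree_lt hne hlt hdvd
  exact Polynomial.C_eq_zero.1 ((hslope_monic.map _).mul_left_eq_zero_iff.1 hzero)

end SingularPoint

section SlopeSum

variable {R ι : Type*} [CommRing R] [Fintype ι] {p q : ℕ} {f : R[X][Y]} {P : ι → R × R} {c : ι → R}

/-- The numerator over the denominator `D` of the rational function
`∑ i, c i * ySlope f y / (X - x)`, where `(x, y) = P i` and each `x` is a root of `D`. -/
noncomputable def slopeSum (D : R[X]) (f : R[X][Y]) (P : ι → R × R) (c : ι → R) : R[X][Y] :=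
  ∑ i, C (C (c i) * (D /ₘ (X - C (P i).1))) * ySlope f (P i).2

theorem coeff_coeff_C_divByMonic_mul_ySlope (D : R[X]) (f : R[X][Y]) (x y : R) (j m : ℕ) :
    ((C (D /ₘ (X - C x)) * ySlope f y).coeff j).coeff m =
      ∑ t ∈ Finset.Icc (j + 1) f.natDegree, ∑ s ∈ Finset.HasAntidiagonal.antidiagonal m,
        ∑ k ∈ Finset.Icc (s.1 + 1) D.natDegree,
          D.coeff k * (f.coeff t).coeff s.2 * (x ^ (k - (s.1 + 1)) * y ^ (t - (j + 1))) := by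
  rw [Polynomial.coeff_C_mul, ySlope, coeff_divByMonic_X_sub_C, Finset.mul_sum, finsetSum_coeff]
  refine Finset.sum_congr rfl fun t _ => ?_
  rw [Polynomial.coeff_mul]
  refine Finset.sum_congr rfl fun s _ => ?_
  rw [← Polynomial.C_pow, Polynomial.coeff_C_mul, coeff_divByMonic_X_sub_C, Finset.sum_mul]
  exact Finset.sum_congr rfl fun k _ => by ring

theorem coeff_coeff_slopeSum (D : R[X]) (f : R[X][Y]) (P : ι → R × R) (c : ι → R) (j m : ℕ) :
    ((slopeSum D f P c).coeff j).coeff m =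
      ∑ t ∈ Finset.Icc (j + 1) f.natDegree, ∑ s ∈ Finset.HasAntidiagonal.antidiagonal m,
        ∑ k ∈ Finset.Icc (s.1 + 1) D.natDegree, D.coeff k * (f.coeff t).coeff s.2 *
          ∑ i, c i * ((P i).1 ^ (k - (s.1 + 1)) * (P i).2 ^ (t - (j + 1))) := by
  have hterm (i : ι) :
      ((C (C (c i) * (D /ₘ (X - C (P i).1))) * ySlope f (P i).2).coeff j).coeff m =
        c i * ((C (D /ₘ (X - C (P i).1)) * ySlope f (P i).2).coeff j).coeff m := by
    rw [Polynomial.C_mul, mul_assoc, Polynomial.coeff_C_mul, Polynomial.coeff_C_mul]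
  simp_rw [slopeSum, finsetSum_coeff, hterm, coeff_coeff_C_divByMonic_mul_ySlope, Finset.mul_sum]
  rw [Finset.sum_comm]
  refine Finset.sum_congr rfl fun t _ => ?_
  rw [Finset.sum_comm]
  refine Finset.sum_congr rfl fun s _ => ?_
  rw [Finset.sum_comm]
  exact Finset.sum_congr rfl fun k _ => Finset.sum_congr rfl fun i _ => by ring

theorem weightLE_slopeSum {d e : ℤ} (D : R[X]) (hf : WeightLE p q d f)
    (hc : ∀ m n : ℕ, (m * p + n * q : ℤ) < e → ∑ i, c i * ((P i).1 ^ m * (P i).2 ^ n) = 0) :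
    WeightLE p q (D.natDegree * p + d - e - p - q) (slopeSum D f P c) := by
  intro m j hmj
  rw [coeff_coeff_slopeSum] at hmj
  obtain ⟨t, ht, hmj⟩ := Finset.exists_ne_zero_of_sum_ne_zero hmj
  obtain ⟨s, hs, hmj⟩ := Finset.exists_ne_zero_of_sum_ne_zero hmj
  obtain ⟨k, hk, hmj⟩ := Finset.exists_ne_zero_of_sum_ne_zero hmj
  have hcoeff := hf s.2 t (right_ne_zero_of_mul (left_ne_zero_of_mul hmj))
  have hmoment := not_lt.1 (mt (hc _ _) (right_ne_zero_of_mul hmj))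
  obtain ⟨hjt, -⟩ := Finset.mem_Icc.1 ht
  obtain ⟨hsk, hkD⟩ := Finset.mem_Icc.1 hk
  obtain rfl := Finset.HasAntidiagonal.mem_antidiagonal.1 hs
  have hkD' : (k * p : ℤ) ≤ D.natDegree * p := by gcongr
  push_cast [Nat.cast_sub hjt, Nat.cast_sub hsk] at hmoment ⊢
  linarith

theorem nodal_mem_prod_pointIdeal (f : R[X][Y]) (P : ι → R × R) :
    of f (Lagrange.nodal Finset.univ fun i => (P i).1) ∈ ∏ i, pointIdeal f (P i) := by
  rw [Lagrange.nodal, map_prod]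
  exact Ideal.prod_mem_prod fun i _ => Ideal.subset_span (Set.mem_insert _ _)

theorem X_sub_C_mul_nodal_divByMonic (x : ι → R) (i : ι) :
    (X - C (x i)) * (Lagrange.nodal Finset.univ x /ₘ (X - C (x i))) =
      Lagrange.nodal Finset.univ x :=
  mul_divByMonic_eq_iff_isRoot.2 (Lagrange.eval_nodal_at_node (Finset.mem_univ i))

theorem span_slopeSum_mul_prod_pointIdeal_le (hP : ∀ i, IsSingular f (P i)) (c : ι → R) :
    Ideal.span {mk f (slopeSum (Lagrange.nodal Finset.univ fun i => (P i).1) f P c)} *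
        ∏ i, pointIdeal f (P i) ≤
      Ideal.span {of f (Lagrange.nodal Finset.univ fun i => (P i).1)} *
        ∏ i, pointIdeal f (P i) := by
  classical
  set D := Lagrange.nodal Finset.univ fun i => (P i).1
  have hterm (i : ι) : Ideal.span {mk f (ySlope f (P i).2)} * ∏ i, pointIdeal f (P i) ≤
      Ideal.span {of f (X - C (P i).1)} * ∏ i, pointIdeal f (P i) := by
    rw [← Finset.mul_prod_erase _ _ (Finset.mem_univ i), ← mul_assoc, ← mul_assoc]
    exact Ideal.mul_mono_left (hP i).span_ySlope_mul_pointIdeal_le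
  rw [Ideal.span_singleton_mul_le_span_singleton_mul]
  intro g hg
  choose k hk hslope using fun i =>
    Ideal.span_singleton_mul_le_span_singleton_mul.1 (hterm i) g hg
  refine ⟨∑ i, of f (C (c i)) * k i, sum_mem fun i _ => Ideal.mul_mem_left _ _ (hk i), ?_⟩
  rw [slopeSum, map_sum, Finset.sum_mul, Finset.mul_sum]
  refine Finset.sum_congr rfl fun i _ => ?_
  have hD : of f (X - C (P i).1) * of f (D /ₘ (X - C (P i).1)) = of f D := by
    rw [← map_mul, X_sub_C_mul_nodal_divByMonic fun i => (P i).1]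
  simp only [map_mul, mk_C]
  linear_combination
    of f (C (c i)) * of f (D /ₘ (X - C (P i).1)) * hslope i + of f (C (c i)) * k i * hD

theorem span_singleton_pow_mul_le {A : Type*} [CommRing A] {a b : A} {M : Ideal A}
    (h : Ideal.span {a} * M ≤ Ideal.span {b} * M) (n : ℕ) :
    Ideal.span {a ^ n} * M ≤ Ideal.span {b ^ n} * M := by
  simp_rw [← Ideal.span_singleton_pow]
  induction n with
  | zero => simp only [pow_zero, le_refl]
  | succ n ih =>
    calc Ideal.span {a} ^ (n + 1) * M = Ideal.span {a} ^ n * (Ideal.span {a} * M) := by ring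
      _ ≤ Ideal.span {a} ^ n * (Ideal.span {b} * M) := Ideal.mul_mono_right h
      _ = Ideal.span {b} * (Ideal.span {a} ^ n * M) := by ring
      _ ≤ Ideal.span {b} * (Ideal.span {b} ^ n * M) := Ideal.mul_mono_right ih
      _ = Ideal.span {b} ^ (n + 1) * M := by ring

theorem pow_mul_mem_span_singleton_pow {A : Type*} [CommRing A] {a b m : A} {M : Ideal A}
    (h : Ideal.span {a} * M ≤ Ideal.span {b} * M) (hm : m ∈ M) (n : ℕ) :
    a ^ n * m ∈ Ideal.span {b ^ n} := by
  obtain ⟨z, -, hz⟩ := Ideal.span_singleton_mul_le_span_singleton_mul.1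
    (span_singleton_pow_mul_le h n) m hm
  exact Ideal.mem_span_singleton.2 ⟨z, hz⟩

theorem mem_of_sum_mem_of_pairwise_isCoprime {A : Type*} [CommRing A] {M : ι → Ideal A}
    (hM : Pairwise (Function.onFun IsCoprime M)) {J : Ideal A} {w : ι → A}
    (hw : ∀ i, ∀ g ∈ M i, w i * g ∈ J) (hsum : ∑ i, w i ∈ J) (i : ι) : w i ∈ J := by
  classical
  obtain ⟨u, hu⟩ := Ideal.exists_forall_sub_mem_ideal hM fun j => if j = i then (1 : A) else 0
  have hmem : ∑ j, w j * (u - if j = i then 1 else 0) ∈ J := sum_mem fun j _ => hw j _ (hu j)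
  have hsplit : w i = u * ∑ j, w j - ∑ j, w j * (u - if j = i then 1 else 0) := by
    simp [mul_sub, ← Finset.sum_mul, mul_comm u]
  rw [hsplit]
  exact sub_mem (Ideal.mul_mem_left _ _ hsum) hmem

theorem of_mul_left_cancel [IsDomain R] (hf : f.Monic) {D : R[X]} (hD : D ≠ 0)
    {a b : AdjoinRoot f} (h : of f D * a = of f D * b) : a = b := by
  have := hf.free_adjoinRoot
  rw [← AdjoinRoot.algebraMap_eq, ← Algebra.smul_def, ← Algebra.smul_def] at h
  exact smul_right_injective _ hD h

end SlopeSum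

section IndependentConditions

variable {R K ι : Type*} [CommRing R] [IsDomain R] [Field K] [Fintype ι] {p q : ℕ} {f : R[X][Y]}
  {g : K[X][Y]}

theorem mk_slopeSum_eq_zero (hf : f.Monic) (hfw : WeightLE p q (f.natDegree * q) f)
    (hrad : IsRadical f) {P : ι → R × R} (hP : ∀ i, IsSingular f (P i)) {c : ι → R}
    (hc : ∀ m n : ℕ, m * p + n * q + p + q ≤ f.natDegree * q →
      ∑ i, c i * ((P i).1 ^ m * (P i).2 ^ n) = 0) :
    mk f (slopeSum (Lagrange.nodal Finset.univ fun i => (P i).1) f P c) = 0 := by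
  set D := Lagrange.nodal Finset.univ fun i => (P i).1
  set b := slopeSum D f P c
  have hDm : D.Monic := Lagrange.nodal_monic
  have hbw : WeightLE p q (D.natDegree * p - 1) b := by
    convert weightLE_slopeSum (e := f.natDegree * q - p - q + 1) D hfw
      (fun m n hmn => hc m n (by zify; linarith)) using 1
    ring
  -- `b / D` preserves an ideal containing `D`, so `b ^ n * D` is divisible by `D ^ n` for all `n`,
  -- although its weight eventually drops below that of `D ^ n`.
  set n := D.natDegree * p + 1 with hn
  have hmem : mk f (b ^ n * C D) ∈ Ideal.span {of f (D ^ n)} := by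
    rw [map_mul, map_pow, mk_C, map_pow]
    exact pow_mul_mem_span_singleton_pow (span_slopeSum_mul_prod_pointIdeal_le hP c)
      (nodal_mem_prod_pointIdeal f P) n
  have hzero : mk f (b ^ n * C D) = 0 := by
    refine ((hbw.pow n).mul weightLE_C).mk_eq_zero hf hfw (hDm.pow n) ?_ hmem
    rw [hDm.natDegree_pow, hn]
    push_cast
    linarith
  have hbn : mk f (b ^ n) = 0 := of_mul_left_cancel hf hDm.ne_zero <| by
    rw [mul_zero, mul_comm, ← mk_C, ← map_mul, hzero]
  exact AdjoinRoot.mk_eq_zero.2 (hrad n b (AdjoinRoot.mk_eq_zero.1 hbn))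

theorem natDegree_pos_of_evalEval_eq_zero (hf : f.Monic) {x y : R} (h : f.evalEval x y = 0) :
    0 < f.natDegree := by
  refine Nat.pos_of_ne_zero fun h0 => ?_
  rw [hf.natDegree_eq_zero.1 h0, evalEval_one] at h
  exact one_ne_zero h

theorem eq_zero_of_mk_slopeSum_eq_zero (hg : g.Monic) {P : ι → K × K}
    (hPinj : Function.Injective P) (hP : ∀ i, IsSingular g (P i)) {c : ι → K}
    (h : mk g (slopeSum (Lagrange.nodal Finset.univ fun i => (P i).1) g P c) = 0) (i : ι) :
    c i = 0 := by
  set D := Lagrange.nodal Finset.univ fun i => (P i).1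
  set E : ι → K[X] := fun j => D /ₘ (X - C (P j).1)
  have hE (j : ι) : (X - C (P j).1) * E j = D := X_sub_C_mul_nodal_divByMonic (fun i => (P i).1) j
  have hE0 : E i ≠ 0 := right_ne_zero_of_mul ((hE i).trans_ne Lagrange.nodal_ne_zero)
  have hw (j : ι) (k : AdjoinRoot g) (hk : k ∈ pointIdeal g (P j)) :
      of g (C (c j) * E j) * mk g (ySlope g (P j).2) * k ∈ Ideal.span {of g D} := by
    obtain ⟨z, -, hz⟩ := Ideal.span_singleton_mul_le_span_singleton_mul.1
      (hP j).span_ySlope_mul_pointIdeal_le k hk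
    refine Ideal.mem_span_singleton.2 ⟨of g (C (c j)) * z, ?_⟩
    rw [mul_assoc, hz, ← hE j, map_mul, map_mul]
    ring
  have hsum : ∑ j, of g (C (c j) * E j) * mk g (ySlope g (P j).2) = 0 := by
    simpa only [slopeSum, map_sum, map_mul, mk_C] using h
  obtain ⟨z, hz⟩ := Ideal.mem_span_singleton.1 <| mem_of_sum_mem_of_pairwise_isCoprime
    (fun j k hjk => isCoprime_pointIdeal g (hPinj.ne hjk)) hw (hsum ▸ zero_mem _) i
  have hdvd : of g (C (c i)) * mk g (ySlope g (P i).2) = of g (X - C (P i).1) * z := by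
    refine of_mul_left_cancel hg hE0 ?_
    rw [← hE i, map_mul, map_mul] at hz
    linear_combination hz
  exact eq_zero_of_C_mul_mk_ySlope_mem hg
    (natDegree_pos_of_evalEval_eq_zero hg (hP i).evalEval_eq_zero)
    (Ideal.mem_span_singleton.2 ⟨z, hdvd⟩)

theorem linearIndependent_of_isSingular (hg : g.Monic) (hgw : WeightLE p q (g.natDegree * q) g)
    (hrad : IsRadical g) {ι : Type*} [Finite ι] {P : ι → K × K} (hPinj : Function.Injective P)
    (hP : ∀ i, IsSingular g (P i)) {J : Finset (ℕ × ℕ)}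
    (hJ : ∀ t : ℕ × ℕ, t.1 * p + t.2 * q + p + q ≤ g.natDegree * q → t ∈ J) :
    LinearIndependent K
      fun (i : ι) (t : J) => (P i).1 ^ (t : ℕ × ℕ).1 * (P i).2 ^ (t : ℕ × ℕ).2 := by
  cases nonempty_fintype ι
  rw [Fintype.linearIndependent_iff]
  intro c hc
  refine eq_zero_of_mk_slopeSum_eq_zero hg hPinj hP
    (mk_slopeSum_eq_zero hg hgw hrad hP fun m n hmn => ?_)
  simpa using congrFun hc ⟨(m, n), hJ (m, n) hmn⟩

end IndependentConditions

section Transfer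

theorem eval_equivMvPolynomial {R : Type*} [CommRing R] (x y : R) (g : R[X][Y]) :
    MvPolynomial.eval ![x, y] (Bivariate.equivMvPolynomial R g) = g.evalEval x y := by
  have h : (MvPolynomial.eval ![x, y]).comp (Bivariate.equivMvPolynomial R).toRingHom =
      evalEvalRingHom x y := by
    ext <;> simp
  exact DFunLike.congr_fun h g

theorem eval_pderiv_zero_equivMvPolynomial {R : Type*} [CommRing R] (x y : R) (g : R[X][Y]) :
    MvPolynomial.eval ![x, y] (pderiv 0 (Bivariate.equivMvPolynomial R g)) =
      (derivative (g.eval (C y))).eval x := by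
  induction g using Polynomial.induction_on' with
  | add g h hg hh => simp only [map_add, Polynomial.eval_add, hg, hh]
  | monomial n g =>
    induction g using Polynomial.induction_on' with
    | add g h hg hh => simp only [map_add, Polynomial.eval_add, hg, hh]
    | monomial m r =>
      simp_rw [← Polynomial.C_mul_X_pow_eq_monomial]
      have hderiv : (derivative ((C (C r * X ^ m) * Y ^ n : R[X][Y]).eval (C y))).eval x =
          r * y ^ n * (m * x ^ (m - 1)) := by
        simp [derivative_mul, derivative_X_pow, ← Polynomial.C_pow, -map_pow]
      rw [hderiv, mul_comm r, mul_assoc]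
      simp

theorem isSingular_of_isSingAt {R : Type} [CommRing R] {g : R[X][Y]} {P : R × R}
    (h : IsSingAt R (Bivariate.equivMvPolynomial R g) P) : IsSingular g P where
  evalEval_eq_zero := by rw [← eval_equivMvPolynomial]; exact h.1
  eval_derivative_eval := by rw [← eval_pderiv_zero_equivMvPolynomial]; exact h.2.1
  evalEval_derivative := by
    rw [← eval_equivMvPolynomial, ← Bivariate.pderiv_one_equivMvPolynomial]; exact h.2.2

variable {R : Type} [CommRing R] {p q : ℕ}

/-- The normed Weierstraß polynomial `wPoly R p q a` as a polynomial in `Y` over `R[X]`. -/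
noncomputable def wBivariate (p q : ℕ) (a : idxSet p q → R) : R[X][Y] :=
  Y ^ p - C (X ^ q) + ∑ i : idxSet p q, C (C (a i) * X ^ (i : ℕ × ℕ).1) * Y ^ (i : ℕ × ℕ).2

theorem mem_idxSet_of_add_le (hp : 0 < p) (hq : 0 < q) {t : ℕ × ℕ}
    (ht : t.1 * p + t.2 * q + p + q ≤ p * q) : t ∈ idxSet p q := by
  simp only [idxSet, Finset.mem_filter, Finset.mem_product, Finset.mem_range]
  refine ⟨⟨?_, ?_⟩, ?_⟩ <;> nlinarith

theorem equivMvPolynomial_wBivariate (a : idxSet p q → R) :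
    Bivariate.equivMvPolynomial R (wBivariate p q a) = wPoly R p q a := by
  simp [wBivariate, wPoly, map_sum]

theorem weightLE_wBivariate (a : idxSet p q → R) : WeightLE p q (p * q) (wBivariate p q a) := by
  refine .add (.sub ?_ ?_) (Finset.sum_induction _ (WeightLE p q (p * q))
    (fun _ _ => .add) (fun i j h => (h rfl).elim) fun i _ => ?_)
  · simpa using weightLE_monomial (p := p) (q := q) (m := 0) (n := p) (1 : R) (by simp)
  · simpa using weightLE_monomial (p := p) (q := q) (m := q) (n := 0) (1 : R) (by simp [mul_comm])
  · refine weightLE_monomial _ ?_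
    exact_mod_cast (Finset.mem_filter.1 i.2).2.le

theorem degree_wBivariate_sub_lt (hp : 0 < p) (a : idxSet p q → R) :
    (wBivariate p q a - Y ^ p).degree < (p : WithBot ℕ) := by
  have h : wBivariate p q a - Y ^ p = -(C (X ^ q) : R[X][Y]) +
      ∑ i : idxSet p q, C (C (a i) * X ^ (i : ℕ × ℕ).1) * Y ^ (i : ℕ × ℕ).2 := by
    rw [wBivariate]
    ring
  rw [h, ← mem_degreeLT]
  refine add_mem (neg_mem (mem_degreeLT.2 ?_)) (sum_mem fun i _ => mem_degreeLT.2 ?_)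
  · exact degree_C_le.trans_lt (mod_cast hp)
  · refine (degree_C_mul_X_pow_le _ _).trans_lt (Nat.cast_lt.2 ?_)
    exact Finset.mem_range.1 (Finset.mem_product.1 (Finset.mem_filter.1 i.2).1).2

theorem wBivariate_monic (hp : 0 < p) (a : idxSet p q → R) :
    (wBivariate p q a).Monic := by
  rw [← add_sub_cancel (Y ^ p) (wBivariate p q a)]
  exact monic_X_pow_add (degree_wBivariate_sub_lt hp a)

theorem natDegree_wBivariate [Nontrivial R] (hp : 0 < p) (a : idxSet p q → R) :
    (wBivariate p q a).natDegree = p := by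
  rw [← add_sub_cancel (Y ^ p) (wBivariate p q a)]
  refine natDegree_eq_of_degree_eq_some ?_
  rw [degree_add_eq_left_of_degree_lt, degree_X_pow]
  rw [degree_X_pow]
  exact degree_wBivariate_sub_lt hp a

variable {K : Type} [Field K]

theorem isRadical_wBivariate {a : idxSet p q → K} (h : Squarefree (wPoly K p q a)) :
    IsRadical (wBivariate p q a) := fun n G hG => by
  have hmap := map_dvd (Bivariate.equivMvPolynomial K) hG
  rw [map_pow, equivMvPolynomial_wBivariate] at hmap
  refine (_root_.map_dvd_iff (Bivariate.equivMvPolynomial K)).1 ?_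
  rw [equivMvPolynomial_wBivariate]
  exact h.isRadical n _ hmap

theorem exists_eval_eq_zero_of_not_isUnit {σ : Type*} [Finite σ] [IsAlgClosed K]
    {G : MvPolynomial σ K} (hG : ¬IsUnit G) :
    ∃ x, MvPolynomial.eval x G = 0 := by
  by_contra! hne
  have hempty : zeroLocus K (Ideal.span {G}) = ∅ := by
    rw [zeroLocus_span]
    exact Set.eq_empty_of_forall_notMem fun x hx => hne x (by simpa using hx G rfl)
  have hrad := vanishingIdeal_zeroLocus_eq_radical (K := K) (Ideal.span {G})
  rw [hempty, vanishingIdeal_empty] at hrad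
  exact hG (Ideal.span_singleton_eq_top.1 (Ideal.radical_eq_top.1 hrad.symm))

theorem squarefree_of_forall_isNodeAt [IsAlgClosed K] {F : MvPolynomial (Fin 2) K}
    (h : ∀ Q, IsSingAt K F Q → IsNodeAt K F Q) : Squarefree F := by
  rintro G ⟨H, rfl⟩
  by_contra hG
  obtain ⟨x, hx⟩ := exists_eval_eq_zero_of_not_isUnit hG
  have hx' : ![x 0, x 1] = x := by
    ext i
    fin_cases i <;> rfl
  have hsing : IsSingAt K (G * G * H) (x 0, x 1) := by
    simp [IsSingAt, hx', hx]
  refine (h _ hsing).2 ?_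
  simp only [hessPoly, Derivation.leibniz, smul_eq_mul, map_add, map_sub, map_mul, map_pow, hx', hx]
  ring

end Transfer

end NodeVectors

open NodeVectors in
theorem node_vectors_linearIndependent_general {K : Type} [Field K] {p q : ℕ} (hp : 0 < p)
    {a : idxSet p q → K} (hF : Squarefree (wPoly K p q a)) {ι : Type*} [Fintype ι]
    {P : ι → K × K} (hPinj : Function.Injective P) (hP : ∀ i, IsSingAt K (wPoly K p q a) (P i))
    {J : Finset (ℕ × ℕ)}
    (hJ : ∀ t : ℕ × ℕ, t.1 * p + t.2 * q + p + q ≤ p * q → t ∈ J) :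
    LinearIndependent K
        (fun (i : ι) (j : J) => (P i).1 ^ (j : ℕ × ℕ).1 * (P i).2 ^ (j : ℕ × ℕ).2) ∧
      (Matrix.of fun (i : ι) (j : J) =>
          (P i).1 ^ (j : ℕ × ℕ).1 * (P i).2 ^ (j : ℕ × ℕ).2).rank = Fintype.card ι := by
  have hdeg := natDegree_wBivariate (q := q) hp a
  have hsing (i : ι) : IsSingular (wBivariate p q a) (P i) :=
    isSingular_of_isSingAt
      (by rw [equivMvPolynomial_wBivariate]; exact hP i)
  have hli := linearIndependent_of_isSingular (wBivariate_monic hp a)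
    (by rw [hdeg]; exact weightLE_wBivariate a)
    (isRadical_wBivariate hF) hPinj hsing (by rwa [hdeg])
  exact ⟨hli, LinearIndependent.rank_matrix hli⟩

/-- **Lemma (rank of the node matrix).** If `C_a` is a nodal curve with `l ≥ 1` pairwise
distinct nodes `(ξ_1,η_1), …, (ξ_l,η_l)`, then the vectors
`v_i = (ξ_i^ν η_i^μ)_{(ν,μ) ∈ I} ∈ K^I` are linearly independent over `K`; equivalently the
`l × n` matrix `(ξ_i^ν η_i^μ)` has rank `l`. -/
theorem node_vectors_linearIndependent
    (K : Type) [Field K] [IsAlgClosed K] [CharZero K]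
    (p q : ℕ) (hp : 1 < p) (hpq : p < q) (hco : Nat.Coprime p q)
    (a : idxSet p q → K)
    (hnodal : ∀ Q : K × K, IsSingAt K (wPoly K p q a) Q → IsNodeAt K (wPoly K p q a) Q)
    (l : ℕ) (hl : 1 ≤ l) (P : Fin l → K × K) (hPinj : Function.Injective P)
    (hPnode : ∀ i, IsNodeAt K (wPoly K p q a) (P i)) :
    LinearIndependent K
        (fun i : Fin l => fun j : idxSet p q => (P i).1 ^ (j : ℕ × ℕ).1 * (P i).2 ^ (j : ℕ × ℕ).2) ∧
      (Matrix.of fun (i : Fin l) (j : idxSet p q) =>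
          (P i).1 ^ (j : ℕ × ℕ).1 * (P i).2 ^ (j : ℕ × ℕ).2).rank = l := by
  simpa only [Fintype.card_fin] using node_vectors_linearIndependent_general (by omega)
    (NodeVectors.squarefree_of_forall_isNodeAt hnodal) hPinj (fun i => (hPnode i).1)
    fun _ => NodeVectors.mem_idxSet_of_add_le (by omega) (by omega)
end
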